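/- arXiv:1011.1544 — 4 statements merged into one kernel-verified Lean document; each statement's English description precedes it below -/
import Mathlib

section
/- Let m ≥ 2, let U ⊆ ℝ^m be open, let (f, ν) be a front on U with values in ℝ^{m+1}, and let p ∈ U be an A₂-point of f such that all singular points near p are A₂-points. If there is an open neighborhood V ⊆ U of p such that K^ext(X, Y)(q) ≥ 0 for every q ∈ V∖Σ and every pair of linearly independent X, Y ∈ ℝ^m, then every singular principal curvature of f at p is non-positive (every eigenvalue of the singular shape operator S at p is ≤ 0). -/
open scoped Matrix

noncomputable section

/-- Partial derivative of a vector-valued map in the `k`-th coordinate direction. -/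
def pd {m N : ℕ} (k : Fin m) (f : (Fin m → ℝ) → (Fin N → ℝ)) :
    (Fin m → ℝ) → (Fin N → ℝ) :=
  fun q => fderiv ℝ f q (Pi.single k 1)

/-- The Jacobian function `λ(q) = det(∂_1 f, …, ∂_m f, ν)` of a frontal `(f, ν)`. -/
def lamb {m : ℕ} (f ν : (Fin m → ℝ) → (Fin (m + 1) → ℝ)) (q : Fin m → ℝ) : ℝ :=
  Matrix.det (Matrix.of (Fin.snoc (fun k : Fin m => pd k f q) (ν q)))

/-- `p` is an `A₂`-point of the frontal `(f, ν)`: a nondegenerate singular point at which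
the null direction is transversal to the singular hypersurface, i.e. `dλ_p(η) ≠ 0` for
(any) nonzero null vector `η`. -/
def IsA2 {m : ℕ} (f ν : (Fin m → ℝ) → (Fin (m + 1) → ℝ)) (p : Fin m → ℝ) : Prop :=
  lamb f ν p = 0 ∧ fderiv ℝ (lamb f ν) p ≠ 0 ∧
  ∀ X : Fin m → ℝ, X ≠ 0 → fderiv ℝ f p X = 0 → fderiv ℝ (lamb f ν) p X ≠ 0

/-- The extrinsic curvature `K^ext(X ∧ Y) = (II(X,X)II(Y,Y) − II(X,Y)²)/(I(X,X)I(Y,Y) − I(X,Y)²)`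
of the plane spanned by `X, Y` at `q`, where `I(X,Y) = ⟨df X, df Y⟩` and
`II(X,Y) = −⟨df X, dν Y⟩`. -/
def Kext {m : ℕ} (f ν : (Fin m → ℝ) → (Fin (m + 1) → ℝ)) (q : Fin m → ℝ)
    (X Y : Fin m → ℝ) : ℝ :=
  ((fderiv ℝ f q X ⬝ᵥ fderiv ℝ ν q X) * (fderiv ℝ f q Y ⬝ᵥ fderiv ℝ ν q Y)
      - (fderiv ℝ f q X ⬝ᵥ fderiv ℝ ν q Y) ^ 2) /
    ((fderiv ℝ f q X ⬝ᵥ fderiv ℝ f q X) * (fderiv ℝ f q Y ⬝ᵥ fderiv ℝ f q Y)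
      - (fderiv ℝ f q X ⬝ᵥ fderiv ℝ f q Y) ^ 2)


/-- `κ` is a singular principal curvature of the front `(f, ν)` at `p` with (singular
principal) eigendirection `X` tangent to the singular hypersurface: there are a smooth unit
conormal field `n` near `p` (orthogonal to `ν` and to the image of the tangent spaces of
the singular hypersurface), a nonzero null vector `η` at `p` and an `I`-orthonormal frame
`c` of the tangent space of the singular hypersurface at `p` such that `(c, η)` is
positively oriented, `(df(c), n, ν)` is positively oriented, and the singular shape
operator equation `D_X n = −sgn(dλ_p(η)) κ · df_p(X)` holds, where
`D_X n = ∂_X n − ⟨∂_X n, ν⟩ν` is the tangential part of `∂_X n`. -/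
def IsSingPrincCurvVec {m : ℕ} (f ν : (Fin m → ℝ) → (Fin (m + 1) → ℝ))
    (p : Fin m → ℝ) (κ : ℝ) (X : Fin m → ℝ) : Prop :=
  X ≠ 0 ∧ fderiv ℝ (lamb f ν) p X = 0 ∧
  ∃ (W : Set (Fin m → ℝ)) (n : (Fin m → ℝ) → (Fin (m + 1) → ℝ))
    (c : Fin m → (Fin m → ℝ)) (η : Fin m → ℝ),
    IsOpen W ∧ p ∈ W ∧ ContDiffOn ℝ (⊤ : ℕ∞) n W ∧
    (∀ q ∈ W, lamb f ν q = 0 →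
      n q ⬝ᵥ n q = 1 ∧ n q ⬝ᵥ ν q = 0 ∧
      ∀ Z : Fin m → ℝ, fderiv ℝ (lamb f ν) q Z = 0 → n q ⬝ᵥ fderiv ℝ f q Z = 0) ∧
    fderiv ℝ f p η = 0 ∧ η ≠ 0 ∧
    (∀ i : Fin m, (i : ℕ) < m - 1 → fderiv ℝ (lamb f ν) p (c i) = 0) ∧
    (∀ i j : Fin m, (i : ℕ) < m - 1 → (j : ℕ) < m - 1 →
      fderiv ℝ f p (c i) ⬝ᵥ fderiv ℝ f p (c j) = (if i = j then (1 : ℝ) else 0)) ∧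
    0 < Matrix.det (Matrix.of fun i : Fin m =>
        if (i : ℕ) < m - 1 then c i else η) ∧
    0 < Matrix.det (Matrix.of fun i : Fin (m + 1) =>
        if h : (i : ℕ) < m - 1 then fderiv ℝ f p (c ⟨(i : ℕ), by omega⟩)
        else if (i : ℕ) = m - 1 then n p else ν p) ∧
    fderiv ℝ n p X - (fderiv ℝ n p X ⬝ᵥ ν p) • ν p
      = (-(Real.sign (fderiv ℝ (lamb f ν) p η)) * κ) • fderiv ℝ f p X

open Filter Topology

lemma aux_fderiv_dot {E : Type*} [NormedAddCommGroup E] [NormedSpace ℝ E] {N : ℕ}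
    {a b : E → (Fin N → ℝ)} {q : E} (ha : DifferentiableAt ℝ a q)
    (hb : DifferentiableAt ℝ b q) :
    DifferentiableAt ℝ (fun x => a x ⬝ᵥ b x) q ∧
    ∀ Z, fderiv ℝ (fun x => a x ⬝ᵥ b x) q Z = fderiv ℝ a q Z ⬝ᵥ b q + a q ⬝ᵥ fderiv ℝ b q Z := by
  have ha' := hasFDerivAt_pi'.1 ha.hasFDerivAt
  have hb' := hasFDerivAt_pi'.1 hb.hasFDerivAt
  have h : HasFDerivAt (fun x => a x ⬝ᵥ b x) _ q :=
    HasFDerivAt.fun_sum (u := Finset.univ) (fun i _ => (ha' i).mul (hb' i))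
  refine ⟨h.differentiableAt, fun Z => ?_⟩
  rw [h.fderiv]
  simp only [dotProduct, _root_.sum_apply, _root_.add_apply,
    _root_.smul_apply, ContinuousLinearMap.comp_apply, ContinuousLinearMap.proj_apply,
    smul_eq_mul, ← Finset.sum_add_distrib]
  exact Finset.sum_congr rfl fun i _ => by ring

lemma aux_real1 {A B C : ℝ → ℝ} {B' C' : ℝ} (hA : ContinuousAt A 0)
    (hB : HasDerivAt B B' 0) (hC : HasDerivAt C C' 0) (hB0 : B 0 = 0) (hC0 : C 0 = 0)
    (h : ∀ᶠ t in 𝓝[≠] (0 : ℝ), 0 ≤ A t * B t - C t ^ 2) : A 0 * B' = 0 := by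
  have hBs := hasDerivAt_iff_tendsto_slope.1 hB
  have hCs := hasDerivAt_iff_tendsto_slope.1 hC
  have hC2 : Tendsto C (𝓝[≠] 0) (𝓝 0) := by
    have := hC.continuousAt.tendsto; rw [hC0] at this
    exact this.mono_left nhdsWithin_le_nhds
  have hA2 : Tendsto A (𝓝[≠] 0) (𝓝 (A 0)) := hA.tendsto.mono_left nhdsWithin_le_nhds
  have hlim : Tendsto (fun t => A t * slope B 0 t - C t * slope C 0 t) (𝓝[≠] 0)
      (𝓝 (A 0 * B' - 0 * C')) := (hA2.mul hBs).sub (hC2.mul hCs)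
  rw [zero_mul, sub_zero] at hlim
  have hgt : 𝓝[>] (0:ℝ) ≤ 𝓝[≠] 0 := nhdsWithin_mono _ (fun x hx => ne_of_gt hx)
  have hlt : 𝓝[<] (0:ℝ) ≤ 𝓝[≠] 0 := nhdsWithin_mono _ (fun x hx => ne_of_lt hx)
  have key : ∀ t, A t * slope B 0 t - C t * slope C 0 t = t⁻¹ * (A t * B t - C t ^ 2) := by
    intro t; simp only [slope, vsub_eq_sub, hB0, hC0, sub_zero, smul_eq_mul]; ring
  apply le_antisymm
  · refine le_of_tendsto (hlim.mono_left hlt) ?_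
    filter_upwards [h.filter_mono hlt, self_mem_nhdsWithin] with t ht ht0
    rw [key]
    exact mul_nonpos_of_nonpos_of_nonneg (inv_nonpos.2 (le_of_lt ht0)) ht
  · refine ge_of_tendsto (hlim.mono_left hgt) ?_
    filter_upwards [h.filter_mono hgt, self_mem_nhdsWithin] with t ht ht0
    rw [key]
    exact mul_nonneg (inv_nonneg.2 (le_of_lt ht0)) ht

lemma aux_real2 {A B C : ℝ → ℝ} {A' B' C' : ℝ} (hA : HasDerivAt A A' 0)
    (hB : HasDerivAt B B' 0) (hC : HasDerivAt C C' 0) (hA0 : A 0 = 0)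
    (hB0 : B 0 = 0) (hC0 : C 0 = 0)
    (h : ∀ᶠ t in 𝓝[≠] (0 : ℝ), 0 ≤ A t * B t - C t ^ 2) : 0 ≤ A' * B' := by
  have hAs := hasDerivAt_iff_tendsto_slope.1 hA
  have hBs := hasDerivAt_iff_tendsto_slope.1 hB
  have hCs := hasDerivAt_iff_tendsto_slope.1 hC
  have hlim := (hAs.mul hBs).sub (hCs.pow 2)
  have : 0 ≤ A' * B' - C' ^ 2 := by
    refine ge_of_tendsto hlim ?_
    filter_upwards [h] with t ht
    have : slope A 0 t * slope B 0 t - slope C 0 t ^ 2 = (t⁻¹) ^ 2 * (A t * B t - C t ^ 2) := by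
      simp only [slope, vsub_eq_sub, hA0, hB0, hC0, sub_zero, smul_eq_mul]; ring
    rw [this]
    positivity
  nlinarith [sq_nonneg C']

lemma aux_lagrange {E : Type*} [NormedAddCommGroup E] [NormedSpace ℝ E] [CompleteSpace E]
    {l G : E → ℝ} {p : E} (hl : ContDiffAt ℝ 1 l p) (hG : ContDiffAt ℝ 1 G p)
    (hl0 : l p = 0) (hne : fderiv ℝ l p ≠ 0) (hz : ∀ᶠ q in 𝓝 p, l q = 0 → G q = 0)
    {X : E} (hX : fderiv ℝ l p X = 0) : fderiv ℝ G p X = 0 := by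
  have hex : IsLocalExtrOn G {x | l x = l p} p := by
    left
    have hp0 : G p = 0 := hz.self_of_nhds hl0
    filter_upwards [hz.filter_mono nhdsWithin_le_nhds, self_mem_nhdsWithin] with q hq hq2
    rw [hp0, hq (hq2.trans hl0)]
  obtain ⟨a, b, hab, h⟩ := hex.exists_multipliers_of_hasStrictFDerivAt_1d
    (hl.hasStrictFDerivAt one_ne_zero) (hG.hasStrictFDerivAt one_ne_zero)
  have hb : b ≠ 0 := by
    rintro rfl
    simp only [zero_smul, add_zero, smul_eq_zero, hne, or_false] at h
    exact hab (by simp [h])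
  have h2 := congrArg (fun L => L X) h
  simp [hX] at h2
  exact h2.resolve_left hb

lemma aux_det_deriv {N : ℕ} (R : ℝ → Matrix (Fin N) (Fin N) ℝ) (k : Fin N) (w : Fin N → ℝ)
    (hR : ContinuousAt R 0) (hk : HasDerivAt (fun t => R t k) w 0) (hk0 : R 0 k = 0) :
    HasDerivAt (fun t => (R t).det) (((R 0).updateRow k w).det) 0 := by
  rw [hasDerivAt_iff_tendsto_slope] at hk ⊢
  have h0 : (R 0).det = 0 := Matrix.det_eq_zero_of_row_eq_zero k (fun j => by rw [hk0]; rfl)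
  have hs : (slope (fun t => (R t).det) 0) =
      fun t => ((R t).updateRow k (slope (fun t => R t k) 0 t)).det := by
    ext t
    simp only [slope, vsub_eq_sub, h0, hk0, sub_zero]
    rw [Matrix.det_updateRow_smul, Matrix.updateRow_eq_self, smul_eq_mul]
  rw [hs]
  have hc : Continuous (fun x : Matrix (Fin N) (Fin N) ℝ × (Fin N → ℝ) =>
      (x.1.updateRow k x.2).det) := by
    exact (continuous_fst.matrix_updateRow k continuous_snd).matrix_det
  exact (hc.tendsto (R 0, w)).comp
    ((hR.tendsto.mono_left nhdsWithin_le_nhds).prodMk_nhds hk)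

lemma aux_det_update {N : ℕ} (M : Matrix (Fin N) (Fin N) ℝ) (k : Fin N) (w v : Fin N → ℝ)
    (hv : M *ᵥ v = Pi.single k 1) : (M.updateRow k w).det = (w ⬝ᵥ v) * M.det := by
  have h := Matrix.mulVec_cramer Mᵀ w
  have h2 := congrArg (fun u => u ⬝ᵥ v) h
  simp only [Matrix.mulVec_transpose, ← Matrix.dotProduct_mulVec, hv, Matrix.det_transpose,
    smul_dotProduct, smul_eq_mul, dotProduct_single, mul_one] at h2
  rw [← Matrix.cramer_transpose_apply, h2, mul_comm]

lemma aux_parallel {N : ℕ} (M : Matrix (Fin N) (Fin N) ℝ) (k : Fin N) (w v : Fin N → ℝ)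
    (hM : M.det ≠ 0) (hv : M *ᵥ v = Pi.single k 1) (hw : ∀ i, i ≠ k → M i ⬝ᵥ w = 0) :
    w = (M k ⬝ᵥ w) • v := by
  rw [← sub_eq_zero]
  apply Matrix.eq_zero_of_mulVec_eq_zero hM
  rw [Matrix.mulVec_sub, Matrix.mulVec_smul, hv]
  ext i
  by_cases h : i = k
  · subst h; simp [Matrix.mulVec]
  · simp [Matrix.mulVec, h, hw i h]

lemma aux_df_eq {m N : ℕ} (f : (Fin m → ℝ) → (Fin N → ℝ)) (q Z : Fin m → ℝ) :
    fderiv ℝ f q Z = ∑ k, Z k • pd k f q := by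
  have h : Z = ∑ k, Z k • (Pi.single k 1 : Fin m → ℝ) := by
    ext j; simp [Finset.sum_apply, Pi.single_apply]
  conv_lhs => rw [h]
  simp only [map_sum, map_smul, pd]

lemma aux_lamb_det {m : ℕ} (f ν : (Fin m → ℝ) → (Fin (m + 1) → ℝ)) (q : Fin m → ℝ)
    (C : Matrix (Fin m) (Fin m) ℝ) :
    (Matrix.of (Fin.snoc (fun i : Fin m => fderiv ℝ f q (C i)) (ν q) :
      Fin (m+1) → Fin (m+1) → ℝ)).det = C.det * lamb f ν q := by
  let Q : Matrix (Fin (m+1)) (Fin (m+1)) ℝ :=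
    Matrix.of (Fin.snoc (fun i : Fin m => (Fin.snoc (C i) 0 : Fin (m+1) → ℝ))
      (Fin.snoc (0 : Fin m → ℝ) 1 : Fin (m+1) → ℝ))
  have hQ : Q.det = C.det := by
    rw [Matrix.det_succ_row Q (Fin.last m), Fin.sum_univ_castSucc]
    have : Q.submatrix (Fin.last m).succAbove (Fin.last m).succAbove = C := by
      ext i j; simp [Q]
    rw [this]
    simp [Q]
  rw [← hQ, lamb, ← Matrix.det_mul]
  congr 1
  ext i j
  rw [Matrix.mul_apply, Fin.sum_univ_castSucc]
  refine Fin.lastCases ?_ (fun i => ?_) i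
  · simp [Q]
  · simp [Q, aux_df_eq f q (C i)]

lemma aux_inj {m : ℕ} (f ν : (Fin m → ℝ) → (Fin (m + 1) → ℝ)) (q : Fin m → ℝ)
    (h : lamb f ν q ≠ 0) (Z : Fin m → ℝ) (hZ : fderiv ℝ f q Z = 0) : Z = 0 := by
  have := Matrix.eq_zero_of_vecMul_eq_zero h (v := (Fin.snoc Z 0 : Fin (m+1) → ℝ)) (by
    ext j
    have h2 := congrFun hZ j
    rw [aux_df_eq] at h2
    simp only [Matrix.vecMul, dotProduct, Fin.sum_univ_castSucc]
    simpa using h2)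
  ext i
  simpa using congrFun this i.castSucc

lemma aux_num_nonneg {m : ℕ} (f ν : (Fin m → ℝ) → (Fin (m + 1) → ℝ)) (q : Fin m → ℝ)
    (h : lamb f ν q ≠ 0) (X Y : Fin m → ℝ) (hXY : LinearIndependent ℝ ![X, Y])
    (hK : 0 ≤ Kext f ν q X Y) :
    0 ≤ (fderiv ℝ f q X ⬝ᵥ fderiv ℝ ν q X) * (fderiv ℝ f q Y ⬝ᵥ fderiv ℝ ν q Y)
      - (fderiv ℝ f q X ⬝ᵥ fderiv ℝ ν q Y) ^ 2 := by
  set D := (fderiv ℝ f q X ⬝ᵥ fderiv ℝ f q X) * (fderiv ℝ f q Y ⬝ᵥ fderiv ℝ f q Y)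
      - (fderiv ℝ f q X ⬝ᵥ fderiv ℝ f q Y) ^ 2 with hD
  set a := fderiv ℝ f q X with ha
  set b := fderiv ℝ f q Y with hb
  rw [LinearIndependent.pair_iff] at hXY
  have hself : ∀ v : Fin (m+1) → ℝ, 0 ≤ v ⬝ᵥ v := fun v =>
    Finset.sum_nonneg fun i _ => mul_self_nonneg _
  have hb0 : 0 < b ⬝ᵥ b := by
    refine lt_of_le_of_ne (hself b) fun h0 => ?_
    have hbz : b = 0 := dotProduct_self_eq_zero.1 h0.symm
    have hY := aux_inj f ν q h Y hbz
    have := hXY 0 1 (by simp [hY])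
    simp at this
  have hv : ((b ⬝ᵥ b) • a - (a ⬝ᵥ b) • b) ⬝ᵥ ((b ⬝ᵥ b) • a - (a ⬝ᵥ b) • b)
      = (b ⬝ᵥ b) * D := by
    simp only [sub_dotProduct, dotProduct_sub, smul_dotProduct, dotProduct_smul, smul_eq_mul, hD,
      dotProduct_comm b a]
    ring
  have hDpos : 0 < D := by
    have h1 := hself ((b ⬝ᵥ b) • a - (a ⬝ᵥ b) • b)
    rw [hv] at h1
    refine lt_of_le_of_ne (nonneg_of_mul_nonneg_right h1 hb0) fun h0 => ?_
    rw [← h0, mul_zero, dotProduct_self_eq_zero] at hv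
    have h2 : fderiv ℝ f q ((b ⬝ᵥ b) • X - (a ⬝ᵥ b) • Y) = 0 := by
      rw [map_sub, map_smul, map_smul]; exact hv
    have h3 := hXY (b ⬝ᵥ b) (-(a ⬝ᵥ b)) (by
      rw [neg_smul, ← sub_eq_add_neg]; exact aux_inj f ν q h _ h2)
    exact hb0.ne' h3.1
  have hKe : Kext f ν q X Y = ((a ⬝ᵥ fderiv ℝ ν q X) * (b ⬝ᵥ fderiv ℝ ν q Y)
      - (a ⬝ᵥ fderiv ℝ ν q Y) ^ 2) / D := rfl
  rw [hKe, div_nonneg_iff] at hK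
  rcases hK with hK | hK
  · exact hK.1
  · exact absurd hK.2 (not_le.2 hDpos)

lemma aux_lamb_smooth {m : ℕ} (f ν : (Fin m → ℝ) → (Fin (m + 1) → ℝ)) (q : Fin m → ℝ)
    (hf : ContDiffAt ℝ (⊤ : ℕ∞) f q) (hν : ContDiffAt ℝ (⊤ : ℕ∞) ν q) :
    ContDiffAt ℝ (⊤ : ℕ∞) (lamb f ν) q := by
  unfold lamb
  simp only [Matrix.det_apply]
  refine ContDiffAt.sum fun σ _ => ContDiffAt.const_smul _ (contDiffAt_prod fun i _ => ?_)
  have hfd : ContDiffAt ℝ (⊤ : ℕ∞) (fderiv ℝ f) q := hf.fderiv_right le_rfl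
  simp only [Matrix.of_apply]
  generalize σ i = s
  refine Fin.lastCases ?_ (fun j => ?_) s
  · simp only [Fin.snoc_last]
    exact contDiffAt_pi.1 hν i
  · simp only [Fin.snoc_castSucc]
    exact contDiffAt_pi.1 (hfd.clm_apply contDiffAt_const) i


/-- If the extrinsic curvature of a front `(f, ν)` in `ℝ^{m+1}` is non-negative near an
`A₂`-point `p` (off the singular set), then the singular principal curvatures at `p` are
all non-positive. -/
theorem singPrincCurv_nonpos_of_Kext_nonneg {m : ℕ} (hm : 2 ≤ m)
    (U : Set (Fin m → ℝ)) (hU : IsOpen U)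
    (f ν : (Fin m → ℝ) → (Fin (m + 1) → ℝ))
    (hf : ContDiffOn ℝ (⊤ : ℕ∞) f U) (hν : ContDiffOn ℝ (⊤ : ℕ∞) ν U)
    (hν1 : ∀ q ∈ U, ν q ⬝ᵥ ν q = 1)
    (htang : ∀ q ∈ U, ∀ k : Fin m, pd k f q ⬝ᵥ ν q = 0)
    (hfront : ∀ q ∈ U, ∀ X : Fin m → ℝ, fderiv ℝ f q X = 0 → fderiv ℝ ν q X = 0 → X = 0)
    (p : Fin m → ℝ) (hp : p ∈ U) (hA2 : IsA2 f ν p)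
    (V₀ : Set (Fin m → ℝ)) (hV₀ : IsOpen V₀) (hpV₀ : p ∈ V₀)
    (hallA2 : ∀ q ∈ V₀ ∩ U, lamb f ν q = 0 → IsA2 f ν q)
    (V : Set (Fin m → ℝ)) (hV : IsOpen V) (hpV : p ∈ V) (hVU : V ⊆ U)
    (hnonneg : ∀ q ∈ V, lamb f ν q ≠ 0 → ∀ X Y : Fin m → ℝ,
      LinearIndependent ℝ ![X, Y] → 0 ≤ Kext f ν q X Y) :
    ∀ (κ : ℝ) (X : Fin m → ℝ), IsSingPrincCurvVec f ν p κ X → κ ≤ 0 := by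
  intro κ X hκ
  obtain ⟨hX0, hlX, W, n, c, η, hW, hpW, hn, hnW, hη, hη0, hcl, hcon, hC, hM, heq⟩ := hκ
  obtain ⟨hl0, hlne, hlη'⟩ := hA2
  have hlη := hlη' η hη0 hη
  -- smoothness
  have hfs : ∀ q ∈ U, ContDiffAt ℝ (⊤ : ℕ∞) f q := fun q hq => hf.contDiffAt (hU.mem_nhds hq)
  have hνs : ∀ q ∈ U, ContDiffAt ℝ (⊤ : ℕ∞) ν q := fun q hq => hν.contDiffAt (hU.mem_nhds hq)
  have hns : ContDiffAt ℝ (⊤ : ℕ∞) n p := hn.contDiffAt (hW.mem_nhds hpW)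
  have hls : ContDiffAt ℝ (⊤ : ℕ∞) (lamb f ν) p := aux_lamb_smooth f ν p (hfs p hp) (hνs p hp)
  have hone : ((⊤ : ℕ∞) : WithTop ℕ∞) ≠ 0 := by simp
  have htwo : minSmoothness ℝ 2 ≤ ((⊤ : ℕ∞) : WithTop ℕ∞) := by
    simp only [minSmoothness_of_isRCLikeNormedField]
    exact WithTop.coe_le_coe.2 (le_top : (2 : ℕ∞) ≤ ⊤)
  have hffs : ∀ q ∈ U, ∀ Z, ContDiffAt ℝ (⊤ : ℕ∞) (fun x => fderiv ℝ f x Z) q :=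
    fun q hq Z => ((hfs q hq).fderiv_right le_rfl).clm_apply contDiffAt_const
  have hνν : ∀ q ∈ U, ∀ Z, ContDiffAt ℝ (⊤ : ℕ∞) (fun x => fderiv ℝ ν x Z) q :=
    fun q hq Z => ((hνs q hq).fderiv_right le_rfl).clm_apply contDiffAt_const
  have hffd : ∀ q ∈ U, ∀ Z, DifferentiableAt ℝ (fun x => fderiv ℝ f x Z) q :=
    fun q hq Z => (hffs q hq Z).differentiableAt hone
  have hννd : ∀ q ∈ U, ∀ Z, DifferentiableAt ℝ (fun x => fderiv ℝ ν x Z) q :=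
    fun q hq Z => (hνν q hq Z).differentiableAt hone
  have hνd : ∀ q ∈ U, DifferentiableAt ℝ ν q := fun q hq => (hνs q hq).differentiableAt hone
  have symm_of : ∀ g : (Fin m → ℝ) → (Fin (m + 1) → ℝ), ∀ q, ContDiffAt ℝ (⊤ : ℕ∞) g q →
      ∀ Y Z, fderiv ℝ (fun x => fderiv ℝ g x Y) q Z = fderiv ℝ (fun x => fderiv ℝ g x Z) q Y := by
    intro g q hg Y Z
    have hd : DifferentiableAt ℝ (fderiv ℝ g) q :=
      (hg.fderiv_right (m := (⊤ : ℕ∞)) le_rfl).differentiableAt hone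
    have h1 : ∀ Y Z, fderiv ℝ (fun x => fderiv ℝ g x Y) q Z = fderiv ℝ (fderiv ℝ g) q Z Y := by
      intro Y Z
      rw [fderiv_clm_apply hd (differentiableAt_const Y)]
      simp
    rw [h1, h1]
    exact (hg.isSymmSndFDerivAt htwo) Z Y
  -- tangency
  have htan : ∀ q ∈ U, ∀ Z, fderiv ℝ f q Z ⬝ᵥ ν q = 0 := by
    intro q hq Z
    rw [aux_df_eq, sum_dotProduct]
    exact Finset.sum_eq_zero fun k _ => by rw [smul_dotProduct, htang q hq k, smul_zero]
  have hνn : ∀ q ∈ U, ∀ Z, ν q ⬝ᵥ fderiv ℝ ν q Z = 0 := by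
    intro q hq Z
    have h1 := (aux_fderiv_dot (hνd q hq) (hνd q hq)).2 Z
    have h2 : (fun x => ν x ⬝ᵥ ν x) =ᶠ[𝓝 q] fun _ => (1 : ℝ) := by
      filter_upwards [hU.mem_nhds hq] with x hx using hν1 x hx
    rw [h2.fderiv_eq, dotProduct_comm (fderiv ℝ ν q Z)] at h1
    simp at h1
    linarith
  have hshape : ∀ q ∈ U, ∀ Y Z, fderiv ℝ (fun x => fderiv ℝ f x Y) q Z ⬝ᵥ ν q
      + fderiv ℝ f q Y ⬝ᵥ fderiv ℝ ν q Z = 0 := by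
    intro q hq Y Z
    have h1 := (aux_fderiv_dot (hffd q hq Y) (hνd q hq)).2 Z
    have h2 : (fun x => fderiv ℝ f x Y ⬝ᵥ ν x) =ᶠ[𝓝 q] fun _ => (0 : ℝ) := by
      filter_upwards [hU.mem_nhds hq] with x hx using htan x hx Y
    rw [h2.fderiv_eq] at h1
    simp at h1
    linarith
  have hsym : ∀ q ∈ U, ∀ Y Z, fderiv ℝ f q Y ⬝ᵥ fderiv ℝ ν q Z
      = fderiv ℝ f q Z ⬝ᵥ fderiv ℝ ν q Y := by
    intro q hq Y Z
    have h1 := hshape q hq Y Z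
    have h2 := hshape q hq Z Y
    rw [symm_of f q (hfs q hq) Y Z] at h1
    linarith
  -- conormal at p
  obtain ⟨hnn, hnν, hnT⟩ := hnW p hpW hl0
  have hkm : m - 1 < m + 1 := by omega
  set k : Fin (m + 1) := ⟨m - 1, hkm⟩ with hk
  set M : Matrix (Fin (m + 1)) (Fin (m + 1)) ℝ := Matrix.of fun i : Fin (m + 1) =>
        if h : (i : ℕ) < m - 1 then fderiv ℝ f p (c ⟨(i : ℕ), by omega⟩)
        else if (i : ℕ) = m - 1 then n p else ν p with hMdef
  set Cm : Matrix (Fin m) (Fin m) ℝ := Matrix.of fun i : Fin m =>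
        if (i : ℕ) < m - 1 then c i else η with hCdef
  have hMrow : ∀ i, i ≠ k → (∃ j : Fin m, (j : ℕ) < m - 1 ∧ M i = fderiv ℝ f p (c j)) ∨
      M i = ν p := by
    intro i hi
    by_cases h : (i : ℕ) < m - 1
    · left
      refine ⟨⟨i, by omega⟩, h, ?_⟩
      ext j
      simp [hMdef, h]
    · right
      have h2 : (i : ℕ) ≠ m - 1 := fun h2 => hi (Fin.ext h2)
      ext j
      simp [hMdef, h, h2]
  have hMk : M k = n p := by
    ext j; simp [hMdef, hk]
  have hMn : M *ᵥ (n p) = Pi.single k 1 := by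
    ext i
    by_cases h : i = k
    · subst h
      simp only [Matrix.mulVec, Pi.single_eq_same]
      rw [hMk, hnn]
    · simp only [Matrix.mulVec, Pi.single_eq_of_ne h]
      rcases hMrow i h with ⟨j, hj, hi⟩ | hi
      · rw [hi, dotProduct_comm]; exact hnT _ (hcl j hj)
      · rw [hi, dotProduct_comm]; exact hnν
  have hpar : ∀ w : Fin (m + 1) → ℝ, (∀ Z, fderiv ℝ f p Z ⬝ᵥ w = 0) → ν p ⬝ᵥ w = 0 →
      w = (n p ⬝ᵥ w) • n p := by
    intro w h1 h2
    have := aux_parallel M k w (n p) hM.ne' hMn (fun i hi => by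
      rcases hMrow i hi with ⟨j, hj, hi⟩ | hi
      · rw [hi]; exact h1 _
      · rw [hi]; exact h2)
    rwa [hMk] at this
  -- derivative of the Jacobian
  have hdl : ∀ Z, Cm.det * fderiv ℝ (lamb f ν) p Z
      = (fderiv ℝ (fun x => fderiv ℝ f x η) p Z ⬝ᵥ n p) * M.det := by
    intro Z
    let R : (Fin m → ℝ) → Matrix (Fin (m + 1)) (Fin (m + 1)) ℝ := fun q =>
      Matrix.of (Fin.snoc (fun i : Fin m => fderiv ℝ f q (Cm i)) (ν q) :
        Fin (m+1) → Fin (m+1) → ℝ)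
    have hRdet : ∀ q, (R q).det = Cm.det * lamb f ν q := fun q => aux_lamb_det f ν q Cm
    have hRk : ∀ q, R q k = fderiv ℝ f q η := by
      intro q
      have hk2 : k = Fin.castSucc (⟨m - 1, by omega⟩ : Fin m) := rfl
      have hCk : Cm ⟨m - 1, by omega⟩ = η := by ext j; simp [hCdef]
      simp only [R, hk2, Matrix.of_apply, Fin.snoc_castSucc]
      ext j
      simp only [Matrix.of_apply, Fin.snoc_castSucc, hCk]
    have hRc : ContinuousAt R p := by
      refine continuousAt_pi.2 fun i => ?_
      refine Fin.lastCases ?_ (fun j => ?_) i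
      · have : (fun q => R q (Fin.last m)) = ν := by
          ext q j; simp [R]
        rw [this]; exact (hνd p hp).continuousAt
      · have : (fun q => R q (Fin.castSucc j)) = fun q => fderiv ℝ f q (Cm j) := by
          ext q j; simp [R]
        rw [this]; exact (hffd p hp _).continuousAt
    have hline : ContinuousAt (fun t : ℝ => p + t • Z) 0 := by fun_prop
    have hz : p + (0 : ℝ) • Z = p := by simp
    have hd := aux_det_deriv (fun t : ℝ => R (p + t • Z)) k
      (fderiv ℝ (fun x => fderiv ℝ f x η) p Z)
      (ContinuousAt.comp (f := fun t : ℝ => p + t • Z) (g := R) (by rw [hz]; exact hRc) hline)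
      (by
        have : (fun t : ℝ => R (p + t • Z) k) = fun t => fderiv ℝ f (p + t • Z) η := by
          ext1 t; exact hRk _
        rw [this]
        exact (hffd p hp η).hasFDerivAt.hasLineDerivAt Z)
      (by simp only [hz, hRk]; exact hη)
    simp only [hRdet, hz] at hd
    have hd2 : HasDerivAt (fun t : ℝ => Cm.det * lamb f ν (p + t • Z))
        (Cm.det * fderiv ℝ (lamb f ν) p Z) 0 :=
      HasDerivAt.const_mul _
        ((hls.differentiableAt hone).hasFDerivAt.hasLineDerivAt Z)
    rw [hd2.unique hd]
    have hup : (R p).updateRow k (fderiv ℝ (fun x => fderiv ℝ f x η) p Z)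
        = M.updateRow k (fderiv ℝ (fun x => fderiv ℝ f x η) p Z) := by
      ext i j
      by_cases h : i = k
      · subst h; simp
      · rw [Matrix.updateRow_ne h, Matrix.updateRow_ne h]
        revert h
        refine Fin.lastCases ?_ (fun i => ?_) i
        · intro _
          have h1 : ¬ (m < m - 1) := by omega
          have h2 : m ≠ m - 1 := by omega
          simp [R, hMdef, h1, h2]
        · intro h
          have h1 : (i : ℕ) < m - 1 := by
            have : (i : ℕ) ≠ m - 1 := fun h2 => h (Fin.ext h2)
            omega
          have hCi : Cm i = c i := by ext j; simp [hCdef, h1]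
          simp [R, hMdef, h1, hCi]
    rw [hup]
    exact aux_det_update M k _ (n p) hMn
  -- curvature along lines
  have hK : ∀ Z, LinearIndependent ℝ ![η, Z] → ∀ᶠ t in 𝓝[≠] (0 : ℝ),
      0 ≤ (fderiv ℝ f (p + t • η) Z ⬝ᵥ fderiv ℝ ν (p + t • η) Z) *
        (fderiv ℝ f (p + t • η) η ⬝ᵥ fderiv ℝ ν (p + t • η) η)
        - (fderiv ℝ f (p + t • η) η ⬝ᵥ fderiv ℝ ν (p + t • η) Z) ^ 2 := by
    intro Z hZ
    have h1 : ∀ᶠ t in 𝓝[≠] (0 : ℝ), lamb f ν (p + t • η) ≠ 0 := by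
      have hd : HasDerivAt (fun t : ℝ => lamb f ν (p + t • η)) (fderiv ℝ (lamb f ν) p η) 0 :=
        (hls.differentiableAt hone).hasFDerivAt.hasLineDerivAt η
      exact hd.eventually_ne hlη
    have h2 : ∀ᶠ t in 𝓝[≠] (0 : ℝ), p + t • η ∈ V := by
      have hline : ContinuousAt (fun t : ℝ => p + t • η) 0 := by fun_prop
      exact (hline.eventually_mem (hV.mem_nhds (by simpa using hpV))).filter_mono
        nhdsWithin_le_nhds
    filter_upwards [h1, h2] with t ht1 ht2
    rw [mul_comm (fderiv ℝ f (p + t • η) Z ⬝ᵥ fderiv ℝ ν (p + t • η) Z)]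
    exact aux_num_nonneg f ν _ ht1 η Z hZ (hnonneg _ ht2 ht1 η Z hZ)
  have hdot : ∀ Y Z T, HasDerivAt (fun t : ℝ => fderiv ℝ f (p + t • T) Y ⬝ᵥ
      fderiv ℝ ν (p + t • T) Z) (fderiv ℝ (fun x => fderiv ℝ f x Y) p T ⬝ᵥ fderiv ℝ ν p Z
        + fderiv ℝ f p Y ⬝ᵥ fderiv ℝ (fun x => fderiv ℝ ν x Z) p T) 0 := by
    intro Y Z T
    obtain ⟨h1, h2⟩ := aux_fderiv_dot (hffd p hp Y) (hννd p hp Z)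
    rw [← h2 T]
    exact h1.hasFDerivAt.hasLineDerivAt T
  -- the derivative of the normal in the null direction
  have hνη := hpar (fderiv ℝ ν p η) (fun Z => by rw [hsym p hp, hη, zero_dotProduct])
    (hνn p hp η)
  set a := n p ⬝ᵥ fderiv ℝ ν p η with ha
  have ha0 : a ≠ 0 := by
    intro h
    rw [h, zero_smul] at hνη
    exact hη0 (hfront p hp η hη hνη)
  set s := fderiv ℝ (fun x => fderiv ℝ f x η) p η ⬝ᵥ n p with hs
  have hlηs := hdl η
  rw [← hs] at hlηs
  have hs0 : s ≠ 0 := by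
    intro h
    rw [h, zero_mul] at hlηs
    exact (mul_ne_zero hC.ne' hlη) hlηs
  have hB' : fderiv ℝ (fun x => fderiv ℝ f x η) p η ⬝ᵥ fderiv ℝ ν p η
        + fderiv ℝ f p η ⬝ᵥ fderiv ℝ (fun x => fderiv ℝ ν x η) p η = a * s := by
    rw [hη, zero_dotProduct, add_zero, hνη, dotProduct_smul, smul_eq_mul]
  -- the second fundamental form vanishes at p
  have hII0 : ∀ Z, fderiv ℝ f p Z ⬝ᵥ fderiv ℝ ν p Z = 0 := by
    intro Z
    by_cases hZ : LinearIndependent ℝ ![η, Z]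
    · have hBd := hdot η η η
      rw [hB'] at hBd
      have := aux_real1 (hdot Z Z η).continuousAt hBd (hdot η Z η) (by simp [hη]) (by simp [hη])
        (hK Z hZ)
      simpa [ha0, hs0] using this
    · rw [LinearIndependent.pair_iff' hη0] at hZ
      push Not at hZ
      obtain ⟨r, rfl⟩ := hZ
      simp [hη]
  have hII : ∀ Y Z, fderiv ℝ f p Y ⬝ᵥ fderiv ℝ ν p Z = 0 := by
    intro Y Z
    have h1 := hII0 (Y + Z)
    simp only [map_add, add_dotProduct, dotProduct_add, hII0] at h1
    rw [hsym p hp Z Y] at h1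
    linarith
  have hνX := hpar (fderiv ℝ ν p X) (fun Z => hII Z X) (hνn p hp X)
  have hfXη : fderiv ℝ (fun x => fderiv ℝ f x η) p X ⬝ᵥ n p = 0 := by
    have h1 := hdl X
    rw [hlX, mul_zero] at h1
    exact (mul_eq_zero.1 h1.symm).resolve_right hM.ne'
  have hfXν : fderiv ℝ (fun x => fderiv ℝ f x η) p X ⬝ᵥ fderiv ℝ ν p X = 0 := by
    rw [hνX, dotProduct_smul, hfXη, smul_zero]
  set b := fderiv ℝ (fun x => fderiv ℝ f x X) p X ⬝ᵥ n p with hb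
  have hA' : fderiv ℝ (fun x => fderiv ℝ f x X) p η ⬝ᵥ fderiv ℝ ν p X
        + fderiv ℝ f p X ⬝ᵥ fderiv ℝ (fun x => fderiv ℝ ν x X) p η = -(a * b) := by
    rw [symm_of f p (hfs p hp) X η, hfXν, symm_of ν p (hνs p hp) X η, zero_add]
    have h1 := (aux_fderiv_dot (hffd p hp X) (hννd p hp η)).2 X
    have h2 := (aux_fderiv_dot (hffd p hp η) (hννd p hp X)).2 X
    have h3 : (fun x => fderiv ℝ f x X ⬝ᵥ fderiv ℝ ν x η) =ᶠ[𝓝 p]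
        fun x => fderiv ℝ f x η ⬝ᵥ fderiv ℝ ν x X := by
      filter_upwards [hU.mem_nhds hp] with x hx using hsym x hx X η
    rw [h3.fderiv_eq, h2, hfXν, hη, zero_dotProduct, hνη, dotProduct_smul, ← hb,
      smul_eq_mul] at h1
    linarith
  have hXη : LinearIndependent ℝ ![η, X] := by
    rw [LinearIndependent.pair_iff' hη0]
    intro r hr
    have h1 := hlX
    rw [← hr, map_smul, smul_eq_mul] at h1
    have hr0 := (mul_eq_zero.1 h1).resolve_right hlη
    rw [hr0, zero_smul] at hr
    exact hX0 hr.symm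
  have hsign : 0 ≤ -(a * b) * (a * s) := by
    have hAd := hdot X X η
    have hBd := hdot η η η
    rw [hA'] at hAd
    rw [hB'] at hBd
    exact aux_real2 hAd hBd (hdot η X η) (by simpa using hII0 X) (by simp [hη]) (by simp [hη])
      (hK X hXη)
  have hbs : b * s ≤ 0 := by
    have h1 : 0 < a ^ 2 := by positivity
    by_contra h
    push Not at h
    nlinarith [mul_pos h1 h]
  -- the conormal derivative
  have hnd : fderiv ℝ n p X ⬝ᵥ fderiv ℝ f p X = -b := by
    let g1 : (Fin m → ℝ) → ℝ := fun q => fderiv ℝ (lamb f ν) q η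
    let g2 : (Fin m → ℝ) → ℝ := fun q => n q ⬝ᵥ fderiv ℝ f q X
    let g3 : (Fin m → ℝ) → ℝ := fun q => fderiv ℝ (lamb f ν) q X
    let g4 : (Fin m → ℝ) → ℝ := fun q => n q ⬝ᵥ fderiv ℝ f q η
    have hlf : ∀ Z, ContDiffAt ℝ (⊤ : ℕ∞) (fun q => fderiv ℝ (lamb f ν) q Z) p :=
      fun Z => (hls.fderiv_right le_rfl).clm_apply contDiffAt_const
    have hnf : ∀ Z, ContDiffAt ℝ (⊤ : ℕ∞) (fun q => n q ⬝ᵥ fderiv ℝ f q Z) p := fun Z =>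
      ContDiffAt.sum fun i _ => (contDiffAt_pi.1 hns i).mul (contDiffAt_pi.1 (hffs p hp Z) i)
    have hG : ContDiffAt ℝ (⊤ : ℕ∞) (fun q => g1 q * g2 q - g3 q * g4 q) p :=
      ((hlf η).mul (hnf X)).sub ((hlf X).mul (hnf η))
    have hle : (1 : WithTop ℕ∞) ≤ ((⊤ : ℕ∞) : WithTop ℕ∞) := by exact_mod_cast le_top
    have hGX := aux_lagrange (hls.of_le hle) (hG.of_le hle) hl0 hlne (by
      filter_upwards [hW.mem_nhds hpW] with q hq hlq
      have := (hnW q hq hlq).2.2 (g1 q • X - g3 q • η) (by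
        simp only [map_sub, map_smul, smul_eq_mul, g1, g3]; ring)
      simpa only [map_sub, map_smul, dotProduct_sub, dotProduct_smul, smul_eq_mul] using this) hlX
    have hd : ∀ {g : (Fin m → ℝ) → ℝ}, ContDiffAt ℝ (⊤ : ℕ∞) g p → HasFDerivAt g (fderiv ℝ g p) p :=
      fun h => (h.differentiableAt hone).hasFDerivAt
    have hGd := ((hd (hlf η)).mul (hd (hnf X))).sub ((hd (hlf X)).mul (hd (hnf η)))
    have h1 : fderiv ℝ (fun q => g1 q * g2 q - g3 q * g4 q) p = _ := hGd.fderiv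
    rw [h1] at hGX
    simp only [_root_.sub_apply, _root_.add_apply, _root_.smul_apply, smul_eq_mul,
      hlX, hη, dotProduct_zero, hnT X hlX, zero_mul, add_zero, sub_zero] at hGX
    have h2 := (mul_eq_zero.1 hGX).resolve_left hlη
    rw [(aux_fderiv_dot (hns.differentiableAt hone) (hffd p hp X)).2 X,
      dotProduct_comm (n p), ← hb] at h2
    linarith
  have hfX : 0 < fderiv ℝ f p X ⬝ᵥ fderiv ℝ f p X := by
    refine lt_of_le_of_ne (Finset.sum_nonneg fun i _ => mul_self_nonneg _) fun h => ?_
    exact hlη' X hX0 (dotProduct_self_eq_zero.1 h.symm) hlX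
  have heq2 := congrArg (fun u => u ⬝ᵥ fderiv ℝ f p X) heq
  simp only [sub_dotProduct, smul_dotProduct, smul_eq_mul, hnd,
    dotProduct_comm (ν p) (fderiv ℝ f p X), htan p hp X, mul_zero, sub_zero] at heq2
  set L := fderiv ℝ (lamb f ν) p η with hL
  set F := fderiv ℝ f p X ⬝ᵥ fderiv ℝ f p X with hF
  by_contra hcontra
  push Not at hcontra
  rcases lt_or_gt_of_ne hlη with h | h
  · rw [Real.sign_of_neg h] at heq2
    have hsn : s < 0 := by
      by_contra hh
      push Not at hh
      have := mul_nonneg hh hM.le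
      have := mul_neg_of_pos_of_neg hC h
      linarith
    have : 0 < κ * F := mul_pos hcontra hfX
    have hbn : b < 0 := by linarith
    have := mul_pos_of_neg_of_neg hbn hsn
    linarith
  · rw [Real.sign_of_pos h] at heq2
    have hsn : 0 < s := by
      by_contra hh
      push Not at hh
      have := mul_nonpos_of_nonpos_of_nonneg hh hM.le
      have := mul_pos hC h
      linarith
    have : 0 < κ * F := mul_pos hcontra hfX
    have hbn : 0 < b := by linarith
    have := mul_pos hbn hsn
    linarith
end
end

section
/- Let m ≥ 2, let U ⊆ ℝ^m be open, let (f, ν) be a front on U with values in ℝ^{m+1}, and let p ∈ U be an A₂-point of f such that all singular points near p are A₂-points. Suppose there exist an open neighborhood V ⊆ U of p, a smooth vector field η̃ on V whose restriction to Σ∩V is a null vector field (df(η̃) = 0 on Σ∩V, η̃ ≠ 0), and a constant δ > 0 such that K^ext(X, η̃(q))(q) ≥ δ for every q ∈ V∖Σ and every X ∈ ℝ^m with X and η̃(q) linearly independent. Then every singular principal curvature of f at p is strictly negative. -/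
open scoped Matrix

noncomputable section

lemma hasDerivAt_dot {N : ℕ} {a b : ℝ → (Fin N → ℝ)} {a' b' : Fin N → ℝ} {t : ℝ}
    (ha : HasDerivAt a a' t) (hb : HasDerivAt b b' t) :
    HasDerivAt (fun s => a s ⬝ᵥ b s) (a' ⬝ᵥ b t + a t ⬝ᵥ b') t := by
  rw [hasDerivAt_pi] at ha hb
  simp only [dotProduct, ← Finset.sum_add_distrib]
  exact HasDerivAt.fun_sum fun i _ => (ha i).mul (hb i)

lemma contDiffAt_dot {m N : ℕ} {a b : (Fin m → ℝ) → (Fin N → ℝ)} {q : Fin m → ℝ}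
    {k : WithTop ℕ∞} (ha : ContDiffAt ℝ k a q) (hb : ContDiffAt ℝ k b q) :
    ContDiffAt ℝ k (fun s => a s ⬝ᵥ b s) q := by
  rw [contDiffAt_pi] at ha hb
  simp only [dotProduct]
  exact ContDiffAt.sum fun i _ => (ha i).mul (hb i)

lemma lamb_contDiffAt {m : ℕ} {f ν : (Fin m → ℝ) → (Fin (m + 1) → ℝ)} {q : Fin m → ℝ}
    (hF : ContDiffAt ℝ 1 (fderiv ℝ f) q) (hν : ContDiffAt ℝ 1 ν q) :
    ContDiffAt ℝ 1 (lamb f ν) q := by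
  have : lamb f ν = fun q => Matrix.det (Matrix.of (Fin.snoc (fun k : Fin m => pd k f q) (ν q))) := rfl
  rw [this]
  simp only [Matrix.det_apply]
  refine ContDiffAt.sum fun σ _ => ContDiffAt.const_smul _ (contDiffAt_prod fun i _ => ?_)
  generalize σ i = j
  revert j
  intro j
  induction j using Fin.lastCases with
  | last => simpa using (contDiffAt_pi.1 hν i)
  | cast j =>
    simp only [Matrix.of_apply, Fin.snoc_castSucc, pd]
    exact contDiffAt_pi.1 (hF.clm_apply contDiffAt_const) i

lemma hasDerivAt_line {m : ℕ} {E : Type*} [NormedAddCommGroup E] [NormedSpace ℝ E]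
    {g : (Fin m → ℝ) → E} {p : Fin m → ℝ} (hg : DifferentiableAt ℝ g p) (v : Fin m → ℝ) :
    HasDerivAt (fun t : ℝ => g (p + t • v)) (fderiv ℝ g p v) 0 := by
  have h1 : HasDerivAt (fun t : ℝ => p + t • v) v 0 := by
    simpa using ((hasDerivAt_id (0:ℝ)).smul_const v).const_add p
  exact HasFDerivAt.comp_hasDerivAt_of_eq (0:ℝ) hg.hasFDerivAt h1 (by simp)

/-- A function vanishing on the zero set of `l` has zero derivative in tangential directions. -/
lemma tangential {m : ℕ} {l φ : (Fin m → ℝ) → ℝ} {p X : Fin m → ℝ} {d : ℝ}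
    (hl : ContDiffAt ℝ 1 l p) (hφ : ContDiffAt ℝ 1 φ p) (hl0 : fderiv ℝ l p ≠ 0)
    (hlp : l p = 0) (hX : fderiv ℝ l p X = 0)
    (hvan : ∀ᶠ q in nhds p, l q = 0 → φ q = 0)
    (hd : HasDerivAt (fun t : ℝ => φ (p + t • X)) d 0) : d = 0 := by
  have hs : IsLocalExtrOn φ {x | l x = l p} p := by
    left
    have hp0 := hvan.self_of_nhds hlp
    refine eventually_nhdsWithin_iff.2 ?_
    filter_upwards [hvan] with q hq hq'
    rw [hp0, hq (by simpa [hlp] using hq')]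
  obtain ⟨a, b, hab, h⟩ := hs.exists_multipliers_of_hasStrictFDerivAt_1d
    (hl.hasStrictFDerivAt one_ne_zero) (hφ.hasStrictFDerivAt one_ne_zero)
  have hd' := (hasDerivAt_line (hφ.differentiableAt one_ne_zero) X).unique hd
  have hb : b ≠ 0 := by
    rintro rfl
    have : a • fderiv ℝ l p = 0 := by simpa using h
    rcases smul_eq_zero.1 this with h | h
    · exact hab (by simp [h])
    · exact hl0 h
  have := congrArg (fun T => T X) h
  simp [hX, hb] at this
  rw [← hd', this]

lemma det_identity {m : ℕ} (M : Matrix (Fin m) (Fin m) ℝ) (T : (Fin m → ℝ) →L[ℝ] (Fin (m+1) → ℝ))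
    (y : Fin (m+1) → ℝ) :
    Matrix.det (Matrix.of (Fin.snoc (fun k : Fin m => T (M k)) y : Fin (m+1) → Fin (m+1) → ℝ))
      = Matrix.det (Matrix.of (Fin.snoc (fun k : Fin m => T (Pi.single k 1)) y : Fin (m+1) → Fin (m+1) → ℝ))
        * M.det := by
  set R : Matrix (Fin (m+1)) (Fin (m+1)) ℝ :=
    Matrix.of (Fin.snoc (fun k : Fin m => T (Pi.single k 1)) y) with hR
  set C : Matrix (Fin (m+1)) (Fin (m+1)) ℝ :=
    (Matrix.fromBlocks M 0 0 (1 : Matrix (Fin 1) (Fin 1) ℝ)).submatrix finSumFinEquiv.symm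
      finSumFinEquiv.symm with hC
  have hCd : C.det = M.det := by
    rw [hC, Matrix.det_submatrix_equiv_self]; simp
  rw [← hCd, mul_comm, ← Matrix.det_mul]
  congr 1
  ext i j
  rw [Matrix.mul_apply, Fin.sum_univ_castSucc]
  have e1 : ∀ i : Fin m, finSumFinEquiv.symm (Fin.castSucc i : Fin (m+1)) = Sum.inl i := fun i =>
    finSumFinEquiv_symm_apply_castAdd i
  have e2 : finSumFinEquiv.symm (Fin.last m : Fin (m+1)) = Sum.inr 0 :=
    finSumFinEquiv_symm_apply_natAdd (0 : Fin 1)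
  induction i using Fin.lastCases with
  | last => simp [hC, hR, e1, e2]
  | cast i =>
    simp only [hC, hR, e1, e2, Matrix.of_apply, Fin.snoc_castSucc, Matrix.submatrix_apply,
      Matrix.fromBlocks_apply₁₁, Matrix.fromBlocks_apply₁₂, Matrix.zero_apply, zero_mul, add_zero]
    conv_lhs => rw [pi_eq_sum_univ' (M i), map_sum]
    simp [Finset.sum_apply]

open Filter Topology in
lemma limit_lemma {A B C D : ℝ → ℝ} {A' B' C' D0 δ : ℝ} (hδ : 0 < δ)
    (hA : HasDerivAt A A' 0) (hB : HasDerivAt B B' 0) (hC : HasDerivAt C C' 0)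
    (hB0 : B 0 = 0) (hC0 : C 0 = 0)
    (hD : Tendsto (fun t => D t / t ^ 2) (𝓝[≠] 0) (𝓝 D0))
    (hD0 : ∀ t, 0 ≤ D t)
    (h : ∀ᶠ t in 𝓝[≠] (0:ℝ), δ * D t ≤ A t * B t - C t ^ 2) :
    A 0 * B' = 0 ∧ (A 0 = 0 → δ * D0 + C' ^ 2 ≤ A' * B') := by
  have hAc : Tendsto A (𝓝[≠] 0) (𝓝 (A 0)) := hA.continuousAt.tendsto.mono_left nhdsWithin_le_nhds
  have sl : ∀ {g : ℝ → ℝ} {g'}, HasDerivAt g g' 0 → g 0 = 0 →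
      Tendsto (fun t => g t / t) (𝓝[≠] 0) (𝓝 g') := by
    intro g g' hg h0
    have := hg.tendsto_slope
    refine this.congr fun t => ?_
    simp [slope, h0, div_eq_inv_mul]
  have hBs := sl hB hB0
  have hCs := sl hC hC0
  constructor
  · have hAB := hAc.mul hBs
    apply le_antisymm
    · refine le_of_tendsto (hAB.mono_left (nhdsWithin_mono (s := Set.Iio 0) _ fun x hx => ne_of_lt hx)) ?_
      filter_upwards [h.filter_mono (nhdsWithin_mono _ fun x (hx : x ∈ Set.Iio (0:ℝ)) => ne_of_lt hx),
        self_mem_nhdsWithin] with t ht ht0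
      rw [← mul_div_assoc]
      exact div_nonpos_of_nonneg_of_nonpos
        (by nlinarith [mul_nonneg hδ.le (hD0 t), sq_nonneg (C t)]) (le_of_lt ht0)
    · refine ge_of_tendsto (hAB.mono_left (nhdsWithin_mono (s := Set.Ioi 0) _ fun x hx => ne_of_gt hx)) ?_
      filter_upwards [h.filter_mono (nhdsWithin_mono _ fun x (hx : x ∈ Set.Ioi (0:ℝ)) => ne_of_gt hx),
        self_mem_nhdsWithin] with t ht ht0
      rw [← mul_div_assoc]
      exact div_nonneg
        (by nlinarith [mul_nonneg hδ.le (hD0 t), sq_nonneg (C t)]) (le_of_lt ht0)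
  · intro hA0
    refine le_of_tendsto_of_tendsto ((hD.const_mul δ).add (hCs.pow 2)) ((sl hA hA0).mul hBs) ?_
    filter_upwards [h, self_mem_nhdsWithin] with t ht ht0
    have ht0 : t ≠ 0 := ht0
    have : 0 < t ^ 2 := by positivity
    have e : A t / t * (B t / t) = (A t * B t) / t ^ 2 := by field_simp
    rw [e, div_pow, ← mul_div_assoc, ← add_div]
    exact div_le_div_of_nonneg_right (by linarith) this.le

lemma dot_cs {N : ℕ} (a b : Fin N → ℝ) : (a ⬝ᵥ b) ^ 2 ≤ (a ⬝ᵥ a) * (b ⬝ᵥ b) := by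
  have := Finset.sum_mul_sq_le_sq_mul_sq Finset.univ a b
  simpa [dotProduct, sq] using this

/-- Gram determinant bound through a unit vector orthogonal to the first factor. -/
lemma gram_pos {N : ℕ} {a b n : Fin N → ℝ} (ha : a ≠ 0) (hn : n ⬝ᵥ n = 1) (han : n ⬝ᵥ a = 0)
    (hbn : b ⬝ᵥ n ≠ 0) : 0 < (a ⬝ᵥ a) * (b ⬝ᵥ b) - (a ⬝ᵥ b) ^ 2 := by
  have hapos : 0 < a ⬝ᵥ a := by
    rcases lt_or_eq_of_le (show 0 ≤ a ⬝ᵥ a from Finset.sum_nonneg fun i _ => mul_self_nonneg _) with h | h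
    · exact h
    · exact absurd (dotProduct_self_eq_zero.1 h.symm) ha
  have h := dot_cs a (b - (b ⬝ᵥ n) • n)
  have han' : a ⬝ᵥ n = 0 := by rw [dotProduct_comm]; exact han
  have hnb : n ⬝ᵥ b = b ⬝ᵥ n := dotProduct_comm _ _
  simp only [dotProduct_sub, sub_dotProduct, dotProduct_smul, smul_dotProduct, han', hn,
    smul_eq_mul, hnb] at h
  have : 0 < (a ⬝ᵥ a) * (b ⬝ᵥ n) ^ 2 := by positivity
  nlinarith

/-- Matrix with rows `a 0, …, a (m-2), y, z`. -/
def Nm {m : ℕ} (a : Fin m → (Fin (m + 1) → ℝ)) (y z : Fin (m + 1) → ℝ) :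
    Matrix (Fin (m + 1)) (Fin (m + 1)) ℝ :=
  Matrix.of fun i : Fin (m + 1) =>
    if h : (i : ℕ) < m - 1 then a ⟨(i : ℕ), by omega⟩ else if (i : ℕ) = m - 1 then y else z

lemma Nm_eq_updateRow {m : ℕ} (a : Fin m → (Fin (m + 1) → ℝ)) (y z : Fin (m + 1) → ℝ) :
    Nm a y z = (Nm a 0 z).updateRow ⟨m - 1, by omega⟩ y := by
  ext i j
  by_cases h : i = ⟨m - 1, by omega⟩
  · subst h
    simp [Nm]
  · rw [Matrix.updateRow_ne h]
    have : (i : ℕ) ≠ m - 1 := fun h' => h (Fin.ext h')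
    simp [Nm, this]

lemma Nm_det_smul {m : ℕ} (a : Fin m → (Fin (m + 1) → ℝ)) (y z : Fin (m + 1) → ℝ) (s : ℝ) :
    (Nm a (s • y) z).det = s * (Nm a y z).det := by
  rw [Nm_eq_updateRow a (s • y), Nm_eq_updateRow a y, Matrix.det_updateRow_smul]

lemma Nm_det_add {m : ℕ} (a : Fin m → (Fin (m + 1) → ℝ)) (y y' z : Fin (m + 1) → ℝ) :
    (Nm a (y + y') z).det = (Nm a y z).det + (Nm a y' z).det := by
  rw [Nm_eq_updateRow a (y + y'), Nm_eq_updateRow a y, Nm_eq_updateRow a y',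
    Matrix.det_updateRow_add]

lemma Nm_mulVec {m : ℕ} {a : Fin m → (Fin (m + 1) → ℝ)} {y z v : Fin (m + 1) → ℝ}
    (ha : ∀ i : Fin m, (i : ℕ) < m - 1 → a i ⬝ᵥ v = 0) (hy : y ⬝ᵥ v = 0) (hz : z ⬝ᵥ v = 0) :
    (Nm a y z).mulVec v = 0 := by
  ext i
  simp only [Matrix.mulVec, Nm, Matrix.of_apply, Pi.zero_apply]
  split_ifs with h1 h2
  · exact ha _ h1
  · exact hy
  · exact hz

lemma Nm_lamb {m : ℕ} (f ν : (Fin m → ℝ) → (Fin (m + 1) → ℝ)) (hm : 2 ≤ m) (q v : Fin m → ℝ)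
    (c : Fin m → (Fin m → ℝ)) :
    (Nm (fun i => fderiv ℝ f q (c i)) (fderiv ℝ f q v) (ν q)).det =
      lamb f ν q * Matrix.det (Matrix.of fun i : Fin m => if (i : ℕ) < m - 1 then c i else v) := by
  rw [lamb]
  simp only [pd]
  rw [← det_identity]
  congr 1
  ext i j
  induction i using Fin.lastCases with
  | last =>
    have h1 : ¬ m < m - 1 := by omega
    have h2 : ¬ m = m - 1 := by omega
    simp [Nm, h1, h2]
  | cast i =>
    simp only [Nm, Matrix.of_apply, Fin.snoc_castSucc, Fin.val_castSucc]
    change _ = fderiv ℝ f q (if (i : ℕ) < m - 1 then c i else v) j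
    by_cases h1 : (i : ℕ) < m - 1
    · simp [h1]
    · have h2 : (i : ℕ) = m - 1 := by omega
      simp [h2]

open Filter Topology in
lemma Nm_det_tendsto {m : ℕ} {ι : Type*} {l : Filter ι} {a : ι → Fin m → (Fin (m + 1) → ℝ)}
    {y z : ι → (Fin (m + 1) → ℝ)} {a0 : Fin m → (Fin (m + 1) → ℝ)} {y0 z0 : Fin (m + 1) → ℝ}
    (ha : ∀ i, Tendsto (fun t => a t i) l (𝓝 (a0 i))) (hy : Tendsto y l (𝓝 y0))
    (hz : Tendsto z l (𝓝 z0)) :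
    Tendsto (fun t => (Nm (a t) (y t) (z t)).det) l (𝓝 (Nm a0 y0 z0).det) := by
  have hc : Continuous fun M : Matrix (Fin (m+1)) (Fin (m+1)) ℝ => M.det :=
    continuous_id.matrix_det
  refine (hc.tendsto _).comp ?_
  refine tendsto_pi_nhds.2 fun i => ?_
  change Tendsto (fun t => if h : (i : ℕ) < m - 1 then a t ⟨(i : ℕ), by omega⟩ else
    if (i : ℕ) = m - 1 then y t else z t) l (𝓝 (if h : (i : ℕ) < m - 1 then a0 ⟨(i : ℕ), by omega⟩ else
    if (i : ℕ) = m - 1 then y0 else z0))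
  split_ifs with h1 h2
  · exact ha _
  · exact hy
  · exact hz

open Filter Topology in
lemma Pm_det_tendsto {m : ℕ} {ι : Type*} {l : Filter ι} {c : Fin m → (Fin m → ℝ)}
    {v : ι → (Fin m → ℝ)} {v0 : Fin m → ℝ} (hv : Tendsto v l (𝓝 v0)) :
    Tendsto (fun t => Matrix.det (Matrix.of fun i : Fin m => if (i : ℕ) < m - 1 then c i else v t)) l
      (𝓝 (Matrix.det (Matrix.of fun i : Fin m => if (i : ℕ) < m - 1 then c i else v0))) := by
  have hc : Continuous fun M : Matrix (Fin m) (Fin m) ℝ => M.det :=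
    continuous_id.matrix_det
  refine (hc.tendsto _).comp ?_
  refine tendsto_pi_nhds.2 fun i => ?_
  change Tendsto (fun t => if (i : ℕ) < m - 1 then c i else v t) l
    (𝓝 (if (i : ℕ) < m - 1 then c i else v0))
  split_ifs with h1
  · exact tendsto_const_nhds
  · exact hv

lemma Pm_det_smul {m : ℕ} (hm : 2 ≤ m) (c : Fin m → (Fin m → ℝ)) (v : Fin m → ℝ) (s : ℝ) :
    Matrix.det (Matrix.of fun i : Fin m => if (i : ℕ) < m - 1 then c i else s • v) =
      s * Matrix.det (Matrix.of fun i : Fin m => if (i : ℕ) < m - 1 then c i else v) := by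
  have key : ∀ v : Fin m → ℝ, (Matrix.of fun i : Fin m => if (i : ℕ) < m - 1 then c i else v) =
      (Matrix.of fun i : Fin m => if (i : ℕ) < m - 1 then c i else 0).updateRow
        ⟨m - 1, by omega⟩ v := by
    intro v
    ext i j
    by_cases h : i = ⟨m - 1, by omega⟩
    · subst h
      simp
    · rw [Matrix.updateRow_ne h]
      have h' : (i : ℕ) ≠ m - 1 := fun h' => h (Fin.ext h')
      have : (i : ℕ) < m - 1 := by omega
      simp [this]
  rw [key (s • v), key v, Matrix.det_updateRow_smul]
/-- If near an `A₂`-point `p` there are an extended null vector field `η̃` and `δ > 0`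
with `K^ext(X ∧ η̃) ≥ δ` off the singular set, then the singular principal curvatures of
the front `(f, ν)` at `p` are all strictly negative. -/
theorem singPrincCurv_neg_of_Kext_ge_delta {m : ℕ} (hm : 2 ≤ m)
    (U : Set (Fin m → ℝ)) (hU : IsOpen U)
    (f ν : (Fin m → ℝ) → (Fin (m + 1) → ℝ))
    (hf : ContDiffOn ℝ (⊤ : ℕ∞) f U) (hν : ContDiffOn ℝ (⊤ : ℕ∞) ν U)
    (hν1 : ∀ q ∈ U, ν q ⬝ᵥ ν q = 1)
    (htang : ∀ q ∈ U, ∀ k : Fin m, pd k f q ⬝ᵥ ν q = 0)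
    (hfront : ∀ q ∈ U, ∀ X : Fin m → ℝ, fderiv ℝ f q X = 0 → fderiv ℝ ν q X = 0 → X = 0)
    (p : Fin m → ℝ) (hp : p ∈ U) (hA2 : IsA2 f ν p)
    (V₀ : Set (Fin m → ℝ)) (hV₀ : IsOpen V₀) (hpV₀ : p ∈ V₀)
    (hallA2 : ∀ q ∈ V₀ ∩ U, lamb f ν q = 0 → IsA2 f ν q)
    (V : Set (Fin m → ℝ)) (hV : IsOpen V) (hpV : p ∈ V) (hVU : V ⊆ U)
    (η' : (Fin m → ℝ) → (Fin m → ℝ)) (hη' : ContDiffOn ℝ (⊤ : ℕ∞) η' V)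
    (hnull : ∀ q ∈ V, lamb f ν q = 0 → fderiv ℝ f q (η' q) = 0 ∧ η' q ≠ 0)
    (δ : ℝ) (hδ : 0 < δ)
    (hKge : ∀ q ∈ V, lamb f ν q ≠ 0 → ∀ X : Fin m → ℝ,
      LinearIndependent ℝ ![X, η' q] → δ ≤ Kext f ν q X (η' q)) :
    ∀ (κ : ℝ) (X : Fin m → ℝ), IsSingPrincCurvVec f ν p κ X → κ < 0 := by
  classical
  obtain ⟨hlp, hl0, hker⟩ := hA2
  -- smoothness
  have hfc : ∀ q ∈ U, ContDiffAt ℝ (⊤ : ℕ∞) f q := fun q hq => hf.contDiffAt (hU.mem_nhds hq)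
  have hνc : ∀ q ∈ U, ContDiffAt ℝ (⊤ : ℕ∞) ν q := fun q hq => hν.contDiffAt (hU.mem_nhds hq)
  have hηc : ContDiffAt ℝ 1 η' p :=
    (hη'.contDiffAt (hV.mem_nhds hpV)).of_le (by exact_mod_cast le_top)
  have hFc : ∀ q ∈ U, ContDiffAt ℝ 1 (fderiv ℝ f) q := fun q hq =>
    (hfc q hq).fderiv_right (m := 1) (by norm_cast)
  have hGc : ∀ q ∈ U, ContDiffAt ℝ 1 (fderiv ℝ ν) q := fun q hq =>
    (hνc q hq).fderiv_right (m := 1) (by norm_cast)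
  have hν1c : ContDiffAt ℝ 1 ν p := (hνc p hp).of_le (by exact_mod_cast le_top)
  have hlc : ContDiffAt ℝ 1 (lamb f ν) p := lamb_contDiffAt (hFc p hp) hν1c
  have hsymf : ∀ q ∈ U, ∀ a b, fderiv ℝ (fderiv ℝ f) q a b = fderiv ℝ (fderiv ℝ f) q b a :=
    fun q hq a b => ((hfc q hq).isSymmSndFDerivAt (by simp; norm_cast)).eq a b
  have hsymν : ∀ q ∈ U, ∀ a b, fderiv ℝ (fderiv ℝ ν) q a b = fderiv ℝ (fderiv ℝ ν) q b a :=
    fun q hq a b => ((hνc q hq).isSymmSndFDerivAt (by simp; norm_cast)).eq a b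
  -- tangency
  have htan : ∀ q ∈ U, ∀ Z, fderiv ℝ f q Z ⬝ᵥ ν q = 0 := by
    intro q hq Z
    rw [pi_eq_sum_univ' Z, map_sum, sum_dotProduct]
    refine Finset.sum_eq_zero fun k _ => ?_
    have := htang q hq k
    simp only [pd] at this
    rw [map_smul, smul_dotProduct, this, smul_zero]
  have evU : ∀ q ∈ U, ∀ v : Fin m → ℝ, ∀ᶠ t : ℝ in nhds 0, q + t • v ∈ U := by
    intro q hq v
    have hcont : ContinuousAt (fun t : ℝ => q + t • v) 0 := by fun_prop
    exact hcont.eventually (by simpa using hU.mem_nhds hq)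
  have dF : ∀ q ∈ U, ∀ v, HasDerivAt (fun t : ℝ => fderiv ℝ f (q + t • v))
      (fderiv ℝ (fderiv ℝ f) q v) 0 := fun q hq v =>
    hasDerivAt_line ((hFc q hq).differentiableAt one_ne_zero) v
  have dG : ∀ q ∈ U, ∀ v, HasDerivAt (fun t : ℝ => fderiv ℝ ν (q + t • v))
      (fderiv ℝ (fderiv ℝ ν) q v) 0 := fun q hq v =>
    hasDerivAt_line ((hGc q hq).differentiableAt one_ne_zero) v
  have dν : ∀ q ∈ U, ∀ v, HasDerivAt (fun t : ℝ => ν (q + t • v)) (fderiv ℝ ν q v) 0 :=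
    fun q hq v => hasDerivAt_line ((hνc q hq).differentiableAt (by simp)) v
  have dFc : ∀ q ∈ U, ∀ v Z, HasDerivAt (fun t : ℝ => fderiv ℝ f (q + t • v) Z)
      (fderiv ℝ (fderiv ℝ f) q v Z) 0 := fun q hq v Z => by
    simpa using (dF q hq v).clm_apply (hasDerivAt_const (0:ℝ) Z)
  have dGc : ∀ q ∈ U, ∀ v Z, HasDerivAt (fun t : ℝ => fderiv ℝ ν (q + t • v) Z)
      (fderiv ℝ (fderiv ℝ ν) q v Z) 0 := fun q hq v Z => by
    simpa using (dG q hq v).clm_apply (hasDerivAt_const (0:ℝ) Z)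
  have h2 : ∀ q ∈ U, ∀ a b, fderiv ℝ (fderiv ℝ f) q b a ⬝ᵥ ν q
      + fderiv ℝ f q a ⬝ᵥ fderiv ℝ ν q b = 0 := by
    intro q hq a b
    have h := hasDerivAt_dot (dFc q hq b a) (dν q hq b)
    have h0 : HasDerivAt (fun t : ℝ => fderiv ℝ f (q + t • b) a ⬝ᵥ ν (q + t • b)) 0 0 := by
      refine (hasDerivAt_const (0:ℝ) (0:ℝ)).congr_of_eventuallyEq ?_
      filter_upwards [evU q hq b] with t ht using htan _ ht a
    simpa using h.unique h0
  have hsym : ∀ q ∈ U, ∀ a b, fderiv ℝ f q a ⬝ᵥ fderiv ℝ ν q b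
      = fderiv ℝ f q b ⬝ᵥ fderiv ℝ ν q a := by
    intro q hq a b
    have h := h2 q hq a b
    have h' := h2 q hq b a
    rw [hsymf q hq] at h
    linarith
  have hνν : ∀ a, fderiv ℝ ν p a ⬝ᵥ ν p = 0 := by
    intro a
    have h := hasDerivAt_dot (dν p hp a) (dν p hp a)
    have h0 : HasDerivAt (fun t : ℝ => ν (p + t • a) ⬝ᵥ ν (p + t • a)) 0 0 := by
      refine (hasDerivAt_const (0:ℝ) (1:ℝ)).congr_of_eventuallyEq ?_
      filter_upwards [evU p hp a] with t ht using hν1 _ ht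
    have := h.unique h0
    simp only [zero_smul, add_zero] at this
    rw [dotProduct_comm (ν p)] at this
    linarith
  intro κ X ⟨hX0, hXt, W, n, c, ηc, hW, hpW, hn, hnS, hηc0, hηcne, hct, hco, hdet1, hdet2, hS⟩
  obtain ⟨hnn, hnν, hnZ⟩ := hnS p hpW hlp
  obtain ⟨hη0, hηne⟩ := hnull p hpV hlp
  set η := η' p with hηdef
  set L := fderiv ℝ (lamb f ν) p with hLdef
  have hLη : L η ≠ 0 := hker η hηne hη0
  set η1 := fderiv ℝ η' p with hη1def
  set w := fderiv ℝ (fderiv ℝ f) p η η + fderiv ℝ f p (η1 η) with hwdef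
  have hηd : ∀ v, HasDerivAt (fun t : ℝ => η' (p + t • v)) (η1 v) 0 := fun v =>
    hasDerivAt_line (hηc.differentiableAt one_ne_zero) v
  have hud : ∀ v, HasDerivAt (fun t : ℝ => fderiv ℝ f (p + t • v) (η' (p + t • v)))
      (fderiv ℝ (fderiv ℝ f) p v η + fderiv ℝ f p (η1 v)) 0 := fun v => by
    simpa using (dF p hp v).clm_apply (hηd v)
  have hgd : ∀ v, HasDerivAt (fun t : ℝ => fderiv ℝ ν (p + t • v) (η' (p + t • v)))
      (fderiv ℝ (fderiv ℝ ν) p v η + fderiv ℝ ν p (η1 v)) 0 := fun v => by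
    simpa using (dG p hp v).clm_apply (hηd v)
  have hu := hud η
  -- orthogonality of conormal to the whole image at nearby singular points
  have hnall : ∀ᶠ q in nhds p, lamb f ν q = 0 → ∀ Z, n q ⬝ᵥ fderiv ℝ f q Z = 0 := by
    filter_upwards [hW.mem_nhds hpW, hV₀.mem_nhds hpV₀, hV.mem_nhds hpV] with q h1 h2 h3 hq Z
    obtain ⟨_, _, hk⟩ := hallA2 q ⟨h2, hVU h3⟩ hq
    obtain ⟨g1, g2⟩ := hnull q h3 hq
    have g3 := hk _ g2 g1
    have := (hnS q h1 hq).2.2 (Z - (fderiv ℝ (lamb f ν) q Z / fderiv ℝ (lamb f ν) q (η' q)) • η' q)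
      (by rw [map_sub, map_smul, smul_eq_mul, div_mul_cancel₀ _ g3, sub_self])
    simpa [g1] using this
  have hnp : ∀ Z, n p ⬝ᵥ fderiv ℝ f p Z = 0 := hnall.self_of_nhds hlp
  have hnp' : ∀ Z, fderiv ℝ f p Z ⬝ᵥ n p = 0 := fun Z => by rw [dotProduct_comm]; exact hnp Z
  have hνn : ν p ⬝ᵥ n p = 0 := by rw [dotProduct_comm]; exact hnν
  have hnne : n p ≠ 0 := by
    intro h; rw [h] at hnn; simp at hnn
  -- the null direction
  obtain ⟨s, hs⟩ : ∃ s : ℝ, ηc = s • η := by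
    refine ⟨L ηc / L η, ?_⟩
    by_contra hne
    refine hker (ηc - (L ηc / L η) • η) (sub_ne_zero.2 hne) (by simp [hη0, hηc0]) ?_
    rw [map_sub, map_smul, smul_eq_mul, div_mul_cancel₀ _ hLη, sub_self]
  have hs0 : s ≠ 0 := by
    rintro rfl; exact hηcne (by simp [hs])
  have hP : 0 < s * Matrix.det (Matrix.of fun i : Fin m => if (i : ℕ) < m - 1 then c i else η) := by
    rw [← Pm_det_smul hm, ← hs]; exact hdet1
  set P := Matrix.det (Matrix.of fun i : Fin m => if (i : ℕ) < m - 1 then c i else η) with hPdef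
  have hN : 0 < (Nm (fun i => fderiv ℝ f p (c i)) (n p) (ν p)).det := hdet2
  -- punctured limit
  have hlim : (Nm (fun i => fderiv ℝ f p (c i)) w (ν p)).det = L η * P := by
    have hsl : ∀ {E : Type} [NormedAddCommGroup E] [NormedSpace ℝ E] {g : ℝ → E} {g' : E},
        HasDerivAt g g' 0 → g 0 = 0 →
        Filter.Tendsto (fun t : ℝ => t⁻¹ • g t) (nhdsWithin 0 {0}ᶜ) (nhds g') := by
      intro E _ _ g g' hg h0
      refine hg.tendsto_slope.congr fun t => ?_
      simp [slope, h0]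
    have t1 := hsl hu (by simpa using hη0)
    have t2 := hsl (hasDerivAt_line (hlc.differentiableAt one_ne_zero) η) (by simpa using hlp)
    have t3 : ∀ i, Filter.Tendsto (fun t : ℝ => fderiv ℝ f (p + t • η) (c i)) (nhdsWithin 0 {0}ᶜ)
        (nhds (fderiv ℝ f p (c i))) := fun i => by
      simpa using (dFc p hp η (c i)).continuousAt.tendsto.mono_left nhdsWithin_le_nhds
    have t4 : Filter.Tendsto (fun t : ℝ => ν (p + t • η)) (nhdsWithin 0 {0}ᶜ)
        (nhds (ν p)) := by
      simpa using (dν p hp η).continuousAt.tendsto.mono_left nhdsWithin_le_nhds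
    have t5 : Filter.Tendsto (fun t : ℝ => η' (p + t • η)) (nhdsWithin 0 {0}ᶜ)
        (nhds η) := by
      simpa using (hηd η).continuousAt.tendsto.mono_left nhdsWithin_le_nhds
    have r1 := Nm_det_tendsto t3 t1 t4
    have r2 := t2.mul (Pm_det_tendsto (c := c) t5)
    refine tendsto_nhds_unique r1 (r2.congr fun t => ?_)
    rw [Nm_det_smul, Nm_lamb f ν hm]
    simp only [smul_eq_mul]; ring
  have hwn : (Nm (fun i => fderiv ℝ f p (c i)) w (ν p)).det
      = (w ⬝ᵥ n p) * (Nm (fun i => fderiv ℝ f p (c i)) (n p) (ν p)).det := by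
    have e : w = (w ⬝ᵥ n p) • n p + (w - (w ⬝ᵥ n p) • n p) := by abel
    conv_lhs => rw [e]
    rw [Nm_det_add, Nm_det_smul]
    have : (Nm (fun i => fderiv ℝ f p (c i)) (w - (w ⬝ᵥ n p) • n p) (ν p)).det = 0 := by
      refine Matrix.exists_mulVec_eq_zero_iff.1 ⟨n p, hnne, Nm_mulVec (fun i _ => hnp' _) ?_ hνn⟩
      simp [sub_dotProduct, hnn]
    rw [this, add_zero]
  -- sign
  have hsg : 0 < Real.sign (L ηc) * (w ⬝ᵥ n p) := by
    have e1 : L ηc = s * L η := by rw [hs, map_smul, smul_eq_mul]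
    have hne : L ηc ≠ 0 := by rw [e1]; exact mul_ne_zero hs0 hLη
    have e2 : (w ⬝ᵥ n p) * (Nm (fun i => fderiv ℝ f p (c i)) (n p) (ν p)).det = L η * P := by
      rw [← hwn, hlim]
    have e3 : 0 < L ηc * (w ⬝ᵥ n p) := by
      have : 0 < (L ηc * (w ⬝ᵥ n p)) * (Nm (fun i => fderiv ℝ f p (c i)) (n p) (ν p)).det := by
        rw [mul_assoc, e2, e1]
        have : s * L η * (L η * P) = (L η) ^ 2 * (s * P) := by ring
        rw [this]; positivity
      exact pos_of_mul_pos_left this hN.le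
    rcases lt_or_gt_of_ne hne with h | h
    · rw [Real.sign_of_neg h]; nlinarith
    · rw [Real.sign_of_pos h]; nlinarith
  have hwn0 : w ⬝ᵥ n p ≠ 0 := fun h => by simp [h] at hsg
  -- dν η = μ n
  set μ := fderiv ℝ ν p η ⬝ᵥ n p with hμdef
  have hμ : fderiv ℝ ν p η = μ • n p := by
    have : fderiv ℝ ν p η - μ • n p = 0 := by
      refine Matrix.eq_zero_of_mulVec_eq_zero hN.ne' (Nm_mulVec (fun i _ => ?_) ?_ ?_)
      · rw [dotProduct_sub, dotProduct_smul, hnp', hsym p hp, hη0]; simp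
      · rw [dotProduct_sub, dotProduct_smul, hnn, dotProduct_comm]; simp [hμdef]
      · rw [dotProduct_sub, dotProduct_smul, hνn, dotProduct_comm, hνν]; simp
    exact sub_eq_zero.1 this
  have hμ0 : μ ≠ 0 := by
    intro h
    rw [h, zero_smul] at hμ
    exact hηne (hfront p hp η hη0 hμ)
  -- limit inequality for tangential vectors
  have hmain : ∀ Z : Fin m → ℝ, Z ≠ 0 → L Z = 0 →
      fderiv ℝ f p Z ⬝ᵥ fderiv ℝ ν p Z = 0 ∧
      0 < (fderiv ℝ (fderiv ℝ f) p η Z ⬝ᵥ fderiv ℝ ν p Z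
        + fderiv ℝ f p Z ⬝ᵥ fderiv ℝ (fderiv ℝ ν) p η Z) * (μ * (w ⬝ᵥ n p)) := by
    intro Z hZ0 hZt
    have hfZ : fderiv ℝ f p Z ≠ 0 := fun h => hker Z hZ0 h hZt
    have dA := hasDerivAt_dot (dFc p hp η Z) (dGc p hp η Z)
    have dB := hasDerivAt_dot hu (hgd η)
    have dC := hasDerivAt_dot hu (dGc p hp η Z)
    simp only [zero_smul, add_zero, ← hηdef, hη0, zero_dotProduct] at dA dB dC
    have hDlim : Filter.Tendsto (fun t : ℝ =>
        ((fderiv ℝ f (p + t • η) Z ⬝ᵥ fderiv ℝ f (p + t • η) Z)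
          * (fderiv ℝ f (p + t • η) (η' (p + t • η)) ⬝ᵥ fderiv ℝ f (p + t • η) (η' (p + t • η)))
          - (fderiv ℝ f (p + t • η) Z ⬝ᵥ fderiv ℝ f (p + t • η) (η' (p + t • η))) ^ 2) / t ^ 2)
        (nhdsWithin 0 {0}ᶜ)
        (nhds ((fderiv ℝ f p Z ⬝ᵥ fderiv ℝ f p Z) * (w ⬝ᵥ w) - (fderiv ℝ f p Z ⬝ᵥ w) ^ 2)) := by
      have t1 : Filter.Tendsto (fun t : ℝ => t⁻¹ • fderiv ℝ f (p + t • η) (η' (p + t • η)))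
          (nhdsWithin 0 {0}ᶜ) (nhds w) := by
        refine hu.tendsto_slope.congr fun t => ?_
        simp [slope, ← hηdef, hη0]
      have t2 : Filter.Tendsto (fun t : ℝ => fderiv ℝ f (p + t • η) Z) (nhdsWithin 0 {0}ᶜ)
          (nhds (fderiv ℝ f p Z)) := by
        simpa using (dFc p hp η Z).continuousAt.tendsto.mono_left nhdsWithin_le_nhds
      have td : ∀ {a b : ℝ → Fin (m+1) → ℝ} {a0 b0}, Filter.Tendsto a (nhdsWithin 0 {0}ᶜ) (nhds a0) →
          Filter.Tendsto b (nhdsWithin 0 {0}ᶜ) (nhds b0) →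
          Filter.Tendsto (fun t => a t ⬝ᵥ b t) (nhdsWithin 0 {0}ᶜ) (nhds (a0 ⬝ᵥ b0)) := by
        intro a b a0 b0 ha hb
        rw [tendsto_pi_nhds] at ha hb
        exact tendsto_finsetSum _ fun i _ => (ha i).mul (hb i)
      refine (((td t2 t2).mul (td t1 t1)).sub ((td t2 t1).pow 2)).congr fun t => ?_
      simp only [dotProduct_smul, smul_dotProduct, smul_eq_mul, div_eq_mul_inv]
      ring
    have hev : ∀ᶠ t in nhdsWithin (0:ℝ) {0}ᶜ, δ *
        ((fderiv ℝ f (p + t • η) Z ⬝ᵥ fderiv ℝ f (p + t • η) Z)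
          * (fderiv ℝ f (p + t • η) (η' (p + t • η)) ⬝ᵥ fderiv ℝ f (p + t • η) (η' (p + t • η)))
          - (fderiv ℝ f (p + t • η) Z ⬝ᵥ fderiv ℝ f (p + t • η) (η' (p + t • η))) ^ 2) ≤
        (fderiv ℝ f (p + t • η) Z ⬝ᵥ fderiv ℝ ν (p + t • η) Z) *
        (fderiv ℝ f (p + t • η) (η' (p + t • η)) ⬝ᵥ fderiv ℝ ν (p + t • η) (η' (p + t • η)))
        - (fderiv ℝ f (p + t • η) (η' (p + t • η)) ⬝ᵥ fderiv ℝ ν (p + t • η) Z) ^ 2 := by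
      have ev1 : ∀ᶠ t in nhdsWithin (0:ℝ) {0}ᶜ, lamb f ν (p + t • η) ≠ 0 := by
        have := (hasDerivAt_line (hlc.differentiableAt one_ne_zero) η).eventually_ne hLη (c := 0)
        simpa using this
      have ev2 : ∀ᶠ t in nhdsWithin (0:ℝ) {0}ᶜ, p + t • η ∈ V := by
        have hcont : ContinuousAt (fun t : ℝ => p + t • η) 0 := by fun_prop
        exact (hcont.eventually (by simpa using hV.mem_nhds hpV)).filter_mono nhdsWithin_le_nhds
      have ev3 : ∀ᶠ t in nhdsWithin (0:ℝ) {0}ᶜ, L (η' (p + t • η)) ≠ 0 := by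
        have hcont : ContinuousAt (fun t : ℝ => L (η' (p + t • η))) 0 :=
          L.continuous.continuousAt.comp (hηd η).continuousAt
        exact (hcont.eventually_ne (by simpa using hLη)).filter_mono nhdsWithin_le_nhds
      filter_upwards [ev1, ev2, ev3] with t h1 h2 h3
      have hli : LinearIndependent ℝ ![Z, η' (p + t • η)] := by
        rw [LinearIndependent.pair_iff]
        intro a b hab
        have hb : b = 0 := by
          have := congrArg L hab
          simpa [hZt, h3] using this
        subst hb
        simpa [hZ0] using hab
      have hK := hKge _ h2 h1 Z hli
      unfold Kext at hK
      rw [hsym _ (hVU h2) Z (η' (p + t • η))] at hK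
      set num := (fderiv ℝ f (p + t • η) Z ⬝ᵥ fderiv ℝ ν (p + t • η) Z) *
        (fderiv ℝ f (p + t • η) (η' (p + t • η)) ⬝ᵥ fderiv ℝ ν (p + t • η) (η' (p + t • η)))
        - (fderiv ℝ f (p + t • η) (η' (p + t • η)) ⬝ᵥ fderiv ℝ ν (p + t • η) Z) ^ 2
      have hcs := dot_cs (fderiv ℝ f (p + t • η) Z) (fderiv ℝ f (p + t • η) (η' (p + t • η)))
      rcases (sub_nonneg.2 hcs).lt_or_eq with h | h
      · exact (le_div_iff₀ h).1 hK
      · rw [← h, div_zero] at hK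
        exact absurd hK (not_le.2 hδ)
    have hfin := limit_lemma hδ dA dB dC (by simp [← hηdef, hη0]) (by simp [← hηdef, hη0]) hDlim
      (fun t => sub_nonneg.2 (dot_cs _ _)) hev
    have hB' : w ⬝ᵥ fderiv ℝ ν p η = μ * (w ⬝ᵥ n p) := by rw [hμ]; simp
    simp only [zero_smul, add_zero] at hfin
    rw [hB'] at hfin
    have hz : fderiv ℝ f p Z ⬝ᵥ fderiv ℝ ν p Z = 0 :=
      (mul_eq_zero.1 hfin.1).resolve_right (mul_ne_zero hμ0 hwn0)
    refine ⟨hz, lt_of_lt_of_le ?_ (hfin.2 hz)⟩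
    have := gram_pos hfZ hnn (hnp Z) hwn0
    positivity
  -- II vanishes at p
  have hII : ∀ Y, fderiv ℝ f p X ⬝ᵥ fderiv ℝ ν p Y = 0 := by
    have hq : ∀ Z, L Z = 0 → fderiv ℝ f p Z ⬝ᵥ fderiv ℝ ν p Z = 0 := by
      intro Z hZ
      by_cases h : Z = 0
      · simp [h]
      · exact (hmain Z h hZ).1
    have ht : ∀ Y, L Y = 0 → fderiv ℝ f p X ⬝ᵥ fderiv ℝ ν p Y = 0 := by
      intro Y hY
      have a1 := hq X hXt
      have a2 := hq Y hY
      have a3 := hq (X + Y) (by rw [map_add, hXt, hY, add_zero])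
      simp only [map_add, add_dotProduct, dotProduct_add] at a3
      have := hsym p hp X Y
      linarith
    intro Y
    have h1 := ht (Y - (L Y / L η) • η)
      (by rw [map_sub, map_smul, smul_eq_mul, div_mul_cancel₀ _ hLη, sub_self])
    rw [map_sub, map_smul, dotProduct_sub, dotProduct_smul, hsym p hp X η, hη0] at h1
    simpa using h1
  -- tangential derivatives
  have hnc : ContDiffAt ℝ 1 n p :=
    (hn.contDiffAt (hW.mem_nhds hpW)).of_le (by exact_mod_cast le_top)
  have hFXc : ContDiffAt ℝ 1 (fun q => fderiv ℝ f q X) p := (hFc p hp).clm_apply contDiffAt_const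
  have hFηc : ContDiffAt ℝ 1 (fun q => fderiv ℝ f q (η' q)) p := (hFc p hp).clm_apply hηc
  have hGηc : ContDiffAt ℝ 1 (fun q => fderiv ℝ ν q (η' q)) p := (hGc p hp).clm_apply hηc
  have T1 := tangential hlc (contDiffAt_dot hnc hFXc) hl0 hlp hXt
    (hnall.mono fun q h hq => h hq X)
    (hasDerivAt_dot (hasDerivAt_line (hnc.differentiableAt one_ne_zero) X) (dFc p hp X X))
  have T2 := tangential hlc (contDiffAt_dot hFXc hGηc) hl0 hlp hXt
    (by
      filter_upwards [hV.mem_nhds hpV] with q h1 hq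
      rw [hsym q (hVU h1), (hnull q h1 hq).1, zero_dotProduct])
    (hasDerivAt_dot (dFc p hp X X) (hgd X))
  have T3 := tangential hlc (contDiffAt_dot hFηc (contDiffAt_const (c := fderiv ℝ ν p X))) hl0 hlp hXt
    (by
      filter_upwards [hV.mem_nhds hpV] with q h1 hq
      rw [(hnull q h1 hq).1, zero_dotProduct])
    (hasDerivAt_dot (hud X) (hasDerivAt_const (0:ℝ) (fderiv ℝ ν p X)))
  simp only [zero_smul, add_zero, ← hηdef, dotProduct_add, add_dotProduct, dotProduct_zero] at T1 T2 T3
  rw [hII, add_zero, hμ, dotProduct_smul, smul_eq_mul] at T2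
  rw [hsym p hp (η1 X), hII, add_zero] at T3
  have hfin := (hmain X hX0 hXt).2
  rw [hsymf p hp η X, hsymν p hp η X, T3, zero_add] at hfin
  -- the shape operator
  have hSX : fderiv ℝ n p X ⬝ᵥ fderiv ℝ f p X
      = -(Real.sign (L ηc)) * κ * (fderiv ℝ f p X ⬝ᵥ fderiv ℝ f p X) := by
    have := congrArg (fun v => v ⬝ᵥ fderiv ℝ f p X) hS
    simp only [sub_dotProduct, smul_dotProduct, smul_eq_mul] at this
    rw [dotProduct_comm (ν p), htan p hp, mul_zero, sub_zero] at this
    exact this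
  have hval : fderiv ℝ f p X ⬝ᵥ fderiv ℝ (fderiv ℝ ν) p X η
      = μ * (-(Real.sign (L ηc)) * κ * (fderiv ℝ f p X ⬝ᵥ fderiv ℝ f p X)) := by
    rw [← hSX]
    have e : n p ⬝ᵥ fderiv ℝ (fderiv ℝ f) p X X = fderiv ℝ (fderiv ℝ f) p X X ⬝ᵥ n p :=
      dotProduct_comm _ _
    rw [e] at T1
    have : fderiv ℝ (fderiv ℝ f) p X X ⬝ᵥ n p = - (fderiv ℝ n p X ⬝ᵥ fderiv ℝ f p X) := by linarith
    rw [this] at T2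
    linarith
  rw [hval] at hfin
  have hpos : 0 ≤ fderiv ℝ f p X ⬝ᵥ fderiv ℝ f p X :=
    Finset.sum_nonneg fun i _ => mul_self_nonneg _
  by_contra hκ
  have hκ : 0 ≤ κ := not_lt.1 hκ
  have : 0 ≤ μ ^ 2 * κ * (fderiv ℝ f p X ⬝ᵥ fderiv ℝ f p X) * (Real.sign (L ηc) * (w ⬝ᵥ n p)) := by
    positivity
  nlinarith
end
end

section
/- Let m ≥ 3, let U ⊆ ℝ^m be open, and let (f, ν) be a front on U with values in ℝ^{m+1} all of whose singular points are A₂-points. Suppose K^ext(X, Y)(q) > 0 for every q ∈ U∖Σ and every pair of linearly independent X, Y ∈ ℝ^m. Then for every q ∈ Σ and every pair of I-orthonormal eigenvectors X, Y of the singular shape operator S at q (singular principal directions) with eigenvalues κ_X, κ_Y, the sectional curvature of the singular submanifold Σ (immersed in ℝ^{m+1} by f|_Σ, with the induced metric) at the plane spanned by X and Y equals κ_X·κ_Y and is non-negative; here this sectional curvature is given by the Gauss equation of the immersion f|_Σ as K_Σ(X,Y) = ⟨α(X,X), α(Y,Y)⟩ − ⟨α(X,Y), α(X,Y)⟩, where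 α(X,Y) denotes the component of the derivative ∂_X(df(Ỹ)) orthogonal to df(T_qΣ) for a vector field Ỹ tangent to Σ extending Y. Furthermore, if there is δ > 0 with K^ext(X, Y)(q) ≥ δ for all q ∈ U∖Σ and all linearly independent X, Y, then these sectional curvatures are strictly positive. -/
open scoped Matrix

noncomputable section

/-- `a` is the component of `v` orthogonal to `df(T_qΣ)`, where `T_qΣ = ker dλ_q`. -/
def IsNormalPart {m : ℕ} (f ν : (Fin m → ℝ) → (Fin (m + 1) → ℝ)) (q : Fin m → ℝ)
    (v a : Fin (m + 1) → ℝ) : Prop :=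
  (∀ Z : Fin m → ℝ, fderiv ℝ (lamb f ν) q Z = 0 → a ⬝ᵥ fderiv ℝ f q Z = 0) ∧
  ∃ Z : Fin m → ℝ, fderiv ℝ (lamb f ν) q Z = 0 ∧ v - a = fderiv ℝ f q Z

section helpers
open Matrix Filter Topology

lemma hasFDerivAt_dot {E : Type*} [NormedAddCommGroup E] [NormedSpace ℝ E] {N : ℕ}
    {u v : E → (Fin N → ℝ)} {x : E} (hu : DifferentiableAt ℝ u x) (hv : DifferentiableAt ℝ v x) :
    DifferentiableAt ℝ (fun y => u y ⬝ᵥ v y) x ∧ ∀ Z : E,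
      fderiv ℝ (fun y => u y ⬝ᵥ v y) x Z = fderiv ℝ u x Z ⬝ᵥ v x + u x ⬝ᵥ fderiv ℝ v x Z := by
  have h : HasFDerivAt (fun y => ∑ i, u y i * v y i)
      (∑ i, (u x i • ((ContinuousLinearMap.proj (R := ℝ) i).comp (fderiv ℝ v x)) +
        v x i • ((ContinuousLinearMap.proj (R := ℝ) (φ := fun _ : Fin N => ℝ) i).comp
          (fderiv ℝ u x)))) x := by
    refine HasFDerivAt.fun_sum fun i _ => ?_
    exact (hasFDerivAt_pi'.1 hu.hasFDerivAt i).mul (hasFDerivAt_pi'.1 hv.hasFDerivAt i)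
  refine ⟨h.differentiableAt, fun Z => ?_⟩
  have h2 := h.fderiv
  change fderiv ℝ (fun y => u y ⬝ᵥ v y) x = _ at h2
  rw [h2]
  simp only [dotProduct, _root_.sum_apply, _root_.add_apply,
    _root_.smul_apply, ContinuousLinearMap.comp_apply, ContinuousLinearMap.proj_apply,
    smul_eq_mul, Finset.sum_add_distrib]
  rw [add_comm]
  congr 1
  exact Finset.sum_congr rfl fun i _ => mul_comm _ _

lemma contDiffAt_dot_s15 {E : Type*} [NormedAddCommGroup E] [NormedSpace ℝ E] {N : ℕ}
    {u v : E → (Fin N → ℝ)} {x : E} {k : WithTop ℕ∞} (hu : ContDiffAt ℝ k u x)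
    (hv : ContDiffAt ℝ k v x) :
    ContDiffAt ℝ k (fun y => u y ⬝ᵥ v y) x := by
  simp only [dotProduct]
  exact ContDiffAt.sum fun i _ => (contDiffAt_pi.1 hu i).mul (contDiffAt_pi.1 hv i)

lemma contDiffAt_det {E : Type*} [NormedAddCommGroup E] [NormedSpace ℝ E] {N : ℕ}
    {M : E → Matrix (Fin N) (Fin N) ℝ} {x : E} {k : WithTop ℕ∞}
    (h : ∀ i, ContDiffAt ℝ k (fun y => M y i) x) :
    ContDiffAt ℝ k (fun y => (M y).det) x := by
  simp only [det_apply]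
  refine ContDiffAt.sum fun σ _ => ContDiffAt.const_smul _ ?_
  exact contDiffAt_prod fun i _ => contDiffAt_pi.1 (h _) i

lemma fderiv_det_row {E : Type*} [NormedAddCommGroup E] [NormedSpace ℝ E] {N : ℕ}
    {M : E → Matrix (Fin N) (Fin N) ℝ} {x : E}
    (h : ∀ i, ContDiffAt ℝ 1 (fun y => M y i) x) (r : Fin N) (hr : M x r = 0) (Z : E) :
    fderiv ℝ (fun y => (M y).det) x Z
      = ((M x).updateRow r (fderiv ℝ (fun y => M y r) x Z)).det := by
  have hadj : DifferentiableAt ℝ (fun y => fun j => (M y).adjugate j r) x := by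
    rw [differentiableAt_pi]
    intro j
    simp only [adjugate_apply]
    refine ContDiffAt.differentiableAt (n := 1) (contDiffAt_det fun i => ?_) (by simp)
    by_cases hi : i = r
    · subst hi; simp only [updateRow_self]; exact contDiffAt_const
    · simp only [updateRow_ne hi]; exact h i
  have hrow : DifferentiableAt ℝ (fun y => M y r) x := (h r).differentiableAt (by simp)
  have e : (fun y => (M y).det) = fun y => M y r ⬝ᵥ (fun j => (M y).adjugate j r) := by
    funext y
    rw [det_eq_sum_mul_adjugate_row _ r]; rfl
  rw [e, (hasFDerivAt_dot hrow hadj).2, hr, zero_dotProduct, add_zero,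
    det_eq_sum_mul_adjugate_row _ r]
  simp only [dotProduct, updateRow_self]
  refine Finset.sum_congr rfl fun j _ => ?_
  congr 1
  simp only [adjugate_apply]
  simp

/-- a function vanishing on a regular level set has derivative vanishing on the tangent space -/
lemma fderiv_zero_of_level {E : Type*} [NormedAddCommGroup E] [NormedSpace ℝ E] [CompleteSpace E]
    {l g : E → ℝ} {x : E} (hl : ContDiffAt ℝ 1 l x) (hg : ContDiffAt ℝ 1 g x)
    (hl0 : l x = 0) (hl' : fderiv ℝ l x ≠ 0) (h : ∀ᶠ y in 𝓝 x, l y = 0 → g y = 0)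
    (Z : E) (hZ : fderiv ℝ l x Z = 0) : fderiv ℝ g x Z = 0 := by
  have hx : g x = 0 := h.self_of_nhds hl0
  have hext : IsLocalExtrOn g {y | l y = l x} x := by
    left
    refine eventually_nhdsWithin_iff.2 ?_
    filter_upwards [h] with y hy hy'
    rw [hx, hy (by rw [← hl0]; exact hy')]
  obtain ⟨a, b, hab, heq⟩ := hext.exists_multipliers_of_hasStrictFDerivAt_1d
    (hl.hasStrictFDerivAt (by simp)) (hg.hasStrictFDerivAt (by simp))
  have hb : b ≠ 0 := by
    rintro rfl
    rw [zero_smul, add_zero, smul_eq_zero] at heq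
    rcases heq with rfl | h
    · exact hab rfl
    · exact hl' h
  have := congrArg (fun L => L Z) heq
  simpa [hZ, hb] using this

lemma dot_sq_le {N : ℕ} (u v : Fin N → ℝ) : (u ⬝ᵥ v) ^ 2 ≤ (u ⬝ᵥ u) * (v ⬝ᵥ v) := by
  have := Finset.sum_mul_sq_le_sq_mul_sq Finset.univ u v
  simpa [dotProduct, pow_two] using this

lemma Kext_num {m : ℕ} (f ν : (Fin m → ℝ) → (Fin (m + 1) → ℝ)) (q X Y : Fin m → ℝ) {δ : ℝ}
    (h0 : 0 < Kext f ν q X Y) (h : δ ≤ Kext f ν q X Y) :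
    0 < (fderiv ℝ f q X ⬝ᵥ fderiv ℝ ν q X) * (fderiv ℝ f q Y ⬝ᵥ fderiv ℝ ν q Y)
      - (fderiv ℝ f q X ⬝ᵥ fderiv ℝ ν q Y) ^ 2 ∧
    δ * ((fderiv ℝ f q X ⬝ᵥ fderiv ℝ f q X) * (fderiv ℝ f q Y ⬝ᵥ fderiv ℝ f q Y)
      - (fderiv ℝ f q X ⬝ᵥ fderiv ℝ f q Y) ^ 2) ≤
      (fderiv ℝ f q X ⬝ᵥ fderiv ℝ ν q X) * (fderiv ℝ f q Y ⬝ᵥ fderiv ℝ ν q Y)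
      - (fderiv ℝ f q X ⬝ᵥ fderiv ℝ ν q Y) ^ 2 := by
  have hc := dot_sq_le (fderiv ℝ f q X) (fderiv ℝ f q Y)
  unfold Kext at h h0
  set D := (fderiv ℝ f q X ⬝ᵥ fderiv ℝ f q X) * (fderiv ℝ f q Y ⬝ᵥ fderiv ℝ f q Y)
      - (fderiv ℝ f q X ⬝ᵥ fderiv ℝ f q Y) ^ 2 with hD
  have hD0 : 0 < D := by
    rcases (show 0 ≤ D by linarith).lt_or_eq with h1 | h1
    · exact h1
    · rw [← h1, div_zero] at h0; exact absurd h0 (lt_irrefl _)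
  exact ⟨(div_pos_iff_of_pos_right hD0).1 h0, (le_div_iff₀ hD0).1 h⟩

lemma contDiffAt_lamb {m : ℕ} {f ν : (Fin m → ℝ) → (Fin (m + 1) → ℝ)} {q : Fin m → ℝ}
    (hf : ContDiffAt ℝ 2 f q) (hν : ContDiffAt ℝ 1 ν q) : ContDiffAt ℝ 1 (lamb f ν) q := by
  unfold lamb
  refine contDiffAt_det fun i => ?_
  refine Fin.lastCases ?_ (fun i => ?_) i
  · refine hν.congr_of_eventuallyEq (Eventually.of_forall fun y => ?_)
    funext j; simp
  · have h : ContDiffAt ℝ 1 (pd i f) q :=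
      (hf.fderiv_right (m := 1) (by norm_num)).clm_apply contDiffAt_const
    refine h.congr_of_eventuallyEq (Eventually.of_forall fun y => ?_)
    funext j; simp

/-- change of basis -/
lemma lamb_mul {m : ℕ} (f ν : (Fin m → ℝ) → (Fin (m + 1) → ℝ)) (q : Fin m → ℝ)
    (C : Matrix (Fin m) (Fin m) ℝ) :
    det (of (Fin.snoc (fun k : Fin m => fderiv ℝ f q (C k)) (ν q)) :
      Matrix (Fin (m+1)) (Fin (m+1)) ℝ) = C.det * lamb f ν q := by
  let D : Matrix (Fin (m+1)) (Fin (m+1)) ℝ :=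
    of (Fin.snoc (fun k : Fin m => (Fin.snoc (C k) 0 : Fin (m+1) → ℝ)) (Pi.single (Fin.last m) 1))
  have hD : D.det = C.det := by
    rw [det_succ_row _ (Fin.last m), Fin.sum_univ_castSucc]
    have h1 : ∀ i : Fin m, D (Fin.last m) i.castSucc = 0 := by
      intro i
      simp [D]
    have h2 : D (Fin.last m) (Fin.last m) = 1 := by simp [D]
    simp only [h1, h2]
    have h3 : D.submatrix (Fin.last m).succAbove (Fin.last m).succAbove = C := by
      ext i j
      simp [D]
    rw [h3]
    simp [← two_mul]
  unfold lamb
  rw [← hD, ← det_mul]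
  congr 1
  ext i j
  rw [mul_apply, Fin.sum_univ_castSucc]
  refine Fin.lastCases ?_ (fun i => ?_) i
  · simp [D]
  · simp only [D, of_apply, Fin.snoc_castSucc, Fin.snoc_last, zero_mul, add_zero, pd]
    conv_lhs => rw [pi_eq_sum_univ' (C i)]
    simp only [map_sum, map_smul, Finset.sum_apply, Pi.smul_apply, smul_eq_mul]


lemma frame_data {m : ℕ} (hm : 3 ≤ m) {f ν : (Fin m → ℝ) → (Fin (m + 1) → ℝ)} {p : Fin m → ℝ}
    (hf : ContDiffAt ℝ 2 f p) (hν : ContDiffAt ℝ 1 ν p)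
    (η : Fin m → ℝ) (c : Fin m → (Fin m → ℝ)) (n : Fin (m + 1) → ℝ)
    (hνν : ν p ⬝ᵥ ν p = 1)
    (hnn : n ⬝ᵥ n = 1) (hnν : n ⬝ᵥ ν p = 0)
    (hnT : ∀ Z : Fin m → ℝ, fderiv ℝ (lamb f ν) p Z = 0 → n ⬝ᵥ fderiv ℝ f p Z = 0)
    (htan : ∀ Z : Fin m → ℝ, fderiv ℝ f p Z ⬝ᵥ ν p = 0)
    (hη : fderiv ℝ f p η = 0)
    (hc : ∀ i : Fin m, (i : ℕ) < m - 1 → fderiv ℝ (lamb f ν) p (c i) = 0)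
    (hC : 0 < Matrix.det (Matrix.of fun i : Fin m =>
        if (i : ℕ) < m - 1 then c i else η))
    (hB : 0 < Matrix.det (Matrix.of fun i : Fin (m + 1) =>
        if h : (i : ℕ) < m - 1 then fderiv ℝ f p (c ⟨(i : ℕ), by omega⟩)
        else if (i : ℕ) = m - 1 then n else ν p)) :
    (∀ w : Fin (m + 1) → ℝ,
      (∀ Z : Fin m → ℝ, fderiv ℝ (lamb f ν) p Z = 0 → w ⬝ᵥ fderiv ℝ f p Z = 0) →
      w = (w ⬝ᵥ n) • n + (w ⬝ᵥ ν p) • ν p) ∧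
    ∃ k : ℝ, 0 < k ∧ ∀ Z, fderiv ℝ (lamb f ν) p Z = k * (fderiv ℝ (fderiv ℝ f) p Z η ⬝ᵥ n) := by
  set B : Matrix (Fin (m+1)) (Fin (m+1)) ℝ := Matrix.of fun i : Fin (m + 1) =>
        if h : (i : ℕ) < m - 1 then fderiv ℝ f p (c ⟨(i : ℕ), by omega⟩)
        else if (i : ℕ) = m - 1 then n else ν p with hBdef
  set C : Matrix (Fin m) (Fin m) ℝ := Matrix.of fun i : Fin m =>
        if (i : ℕ) < m - 1 then c i else η with hCdef
  have hνn : ν p ⬝ᵥ n = 0 := by rw [dotProduct_comm]; exact hnν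
  constructor
  · intro w hw
    set d := w - ((w ⬝ᵥ n) • n + (w ⬝ᵥ ν p) • ν p) with hd
    suffices d = 0 from sub_eq_zero.1 this
    apply Matrix.eq_zero_of_mulVec_eq_zero hB.ne'
    funext i
    change B i ⬝ᵥ d = 0
    rw [dotProduct_comm]
    by_cases h1 : (i : ℕ) < m - 1
    · have : B i = fderiv ℝ f p (c ⟨(i : ℕ), by omega⟩) := by funext j; simp [B, h1]
      rw [this, hd]
      have hc' := hc ⟨(i : ℕ), by omega⟩ h1
      simp only [sub_dotProduct, add_dotProduct, smul_dotProduct]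
      rw [hw _ hc', hnT _ hc', dotProduct_comm (ν p), htan]
      simp
    · by_cases h2 : (i : ℕ) = m - 1
      · have : B i = n := by funext j; simp [B, h2]
        rw [this, hd]
        simp [sub_dotProduct, add_dotProduct, smul_dotProduct, hnn, hνn]
      · have : B i = ν p := by funext j; simp [B, h1, h2]
        rw [this, hd]
        simp [sub_dotProduct, add_dotProduct, smul_dotProduct, hνν, hnν]
  · refine ⟨B.det / C.det, div_pos hB hC, fun Z => ?_⟩
    let M : (Fin m → ℝ) → Matrix (Fin (m+1)) (Fin (m+1)) ℝ := fun x =>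
      of (Fin.snoc (fun k : Fin m => fderiv ℝ f x (C k)) (ν x))
    have hMl : ∀ x, M x (Fin.last m) = ν x := fun x => by funext j; simp [M]
    have hMc : ∀ x (i : Fin m), M x i.castSucc = fderiv ℝ f x (C i) :=
      fun x i => by funext j; simp [M]
    have hFd : ContDiffAt ℝ 1 (fderiv ℝ f) p := hf.fderiv_right (m := 1) (by norm_num)
    have hMd : ∀ i, ContDiffAt ℝ 1 (fun y => M y i) p := by
      intro i
      refine Fin.lastCases ?_ (fun i => ?_) i
      · simp only [hMl]; exact hν
      · simp only [hMc]; exact hFd.clm_apply contDiffAt_const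
    let r0 : Fin m := ⟨m - 1, by omega⟩
    have hCr : C r0 = η := by
      funext j
      simp [C, r0]
    have hMr : M p r0.castSucc = 0 := by rw [hMc, hCr, hη]
    have h1 := fderiv_det_row hMd r0.castSucc hMr Z
    have h2 : (fun y => (M y).det) = fun y => C.det * lamb f ν y := by
      funext y; exact lamb_mul f ν y C
    have hl := (contDiffAt_lamb hf hν).differentiableAt (by simp)
    rw [h2, fderiv_const_mul hl] at h1
    have h3 : fderiv ℝ (fun y => M y r0.castSucc) p Z = fderiv ℝ (fderiv ℝ f) p Z η := by
      simp only [hMc, hCr]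
      rw [fderiv_clm_apply (hFd.differentiableAt (by simp)) (differentiableAt_const _)]
      simp
    rw [h3] at h1
    set w := fderiv ℝ (fderiv ℝ f) p Z η with hw
    have h4 : w = (w ⬝ᵥ n) • n + (w - (w ⬝ᵥ n) • n) := by abel
    have h5 : ((M p).updateRow r0.castSucc (w - (w ⬝ᵥ n) • n)).det = 0 := by
      rw [← Matrix.exists_mulVec_eq_zero_iff]
      refine ⟨n, ?_, ?_⟩
      · rintro rfl; simp at hnn
      · funext i
        change ((M p).updateRow r0.castSucc (w - (w ⬝ᵥ n) • n)) i ⬝ᵥ n = 0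
        by_cases hi : i = r0.castSucc
        · rw [hi, updateRow_self]
          simp [sub_dotProduct, hnn]
        · rw [updateRow_ne hi]
          revert hi
          refine Fin.lastCases ?_ (fun i => ?_) i
          · intro _; rw [hMl]; exact hνn
          · intro hi
            have hi' : (i : ℕ) < m - 1 := by
              have := i.2
              have h : (i : ℕ) ≠ m - 1 := fun h => hi (by ext; simpa [r0] using h)
              omega
            have : C i = c i := by funext j; simp [C, hi']
            rw [hMc, dotProduct_comm, this]
            exact hnT _ (hc i hi')
    have h6 : (M p).updateRow r0.castSucc n = B := by
      funext i
      by_cases hi : i = r0.castSucc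
      · rw [hi, updateRow_self]
        funext j
        simp [B, r0]
      · rw [updateRow_ne hi]
        revert hi
        refine Fin.lastCases ?_ (fun i => ?_) i
        · intro _; rw [hMl]
          have a1 : ¬ (m < m - 1) := by omega
          have a2 : ¬ (m = m - 1) := by omega
          funext j
          simp [B, a1, a2]
        · intro hi
          have hi' : (i : ℕ) < m - 1 := by
            have := i.2
            have h : (i : ℕ) ≠ m - 1 := fun h => hi (by ext; simpa [r0] using h)
            omega
          have : C i = c i := by funext j; simp [C, hi']
          rw [hMc, this]
          funext j
          simp [B, hi']
    rw [h4, det_updateRow_add, h5, det_updateRow_smul, h6] at h1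
    simp only [_root_.smul_apply, smul_eq_mul, add_zero] at h1
    field_simp
    rw [mul_comm, h1]; ring

/-- The hypotheses of the theorem on the front. -/
structure FrontHyp {m : ℕ} (U : Set (Fin m → ℝ)) (f ν : (Fin m → ℝ) → (Fin (m + 1) → ℝ)) :
    Prop where
  hU : IsOpen U
  hf : ContDiffOn ℝ (⊤ : ℕ∞) f U
  hν : ContDiffOn ℝ (⊤ : ℕ∞) ν U
  hν1 : ∀ q ∈ U, ν q ⬝ᵥ ν q = 1
  htang : ∀ q ∈ U, ∀ k : Fin m, pd k f q ⬝ᵥ ν q = 0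
  hfront : ∀ q ∈ U, ∀ X : Fin m → ℝ, fderiv ℝ f q X = 0 → fderiv ℝ ν q X = 0 → X = 0
  hallA2 : ∀ q ∈ U, lamb f ν q = 0 → IsA2 f ν q
  hpos : ∀ q ∈ U, lamb f ν q ≠ 0 → ∀ X Y : Fin m → ℝ,
      LinearIndependent ℝ ![X, Y] → 0 < Kext f ν q X Y

section
variable {m : ℕ} {U : Set (Fin m → ℝ)} {f ν : (Fin m → ℝ) → (Fin (m + 1) → ℝ)} {q : Fin m → ℝ}

lemma FrontHyp.cf (H : FrontHyp U f ν) (hq : q ∈ U) : ContDiffAt ℝ (⊤ : ℕ∞) f q :=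
  H.hf.contDiffAt (H.hU.mem_nhds hq)

lemma FrontHyp.cν (H : FrontHyp U f ν) (hq : q ∈ U) : ContDiffAt ℝ (⊤ : ℕ∞) ν q :=
  H.hν.contDiffAt (H.hU.mem_nhds hq)

lemma FrontHyp.cf2 (H : FrontHyp U f ν) (hq : q ∈ U) : ContDiffAt ℝ 2 f q :=
  contDiffAt_infty.1 (H.cf hq) 2

lemma FrontHyp.cν2 (H : FrontHyp U f ν) (hq : q ∈ U) : ContDiffAt ℝ 2 ν q :=
  contDiffAt_infty.1 (H.cν hq) 2

lemma FrontHyp.cF (H : FrontHyp U f ν) (hq : q ∈ U) : ContDiffAt ℝ 1 (fderiv ℝ f) q :=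
  (H.cf2 hq).fderiv_right (by norm_num)

lemma FrontHyp.cN (H : FrontHyp U f ν) (hq : q ∈ U) : ContDiffAt ℝ 1 (fderiv ℝ ν) q :=
  (H.cν2 hq).fderiv_right (by norm_num)

lemma FrontHyp.dF (H : FrontHyp U f ν) (hq : q ∈ U) : DifferentiableAt ℝ (fderiv ℝ f) q :=
  (H.cF hq).differentiableAt (by simp)

lemma FrontHyp.dN (H : FrontHyp U f ν) (hq : q ∈ U) : DifferentiableAt ℝ (fderiv ℝ ν) q :=
  (H.cN hq).differentiableAt (by simp)

lemma FrontHyp.dν (H : FrontHyp U f ν) (hq : q ∈ U) : DifferentiableAt ℝ ν q :=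
  (H.cν2 hq).differentiableAt (by simp)

lemma FrontHyp.clamb (H : FrontHyp U f ν) (hq : q ∈ U) : ContDiffAt ℝ 1 (lamb f ν) q :=
  contDiffAt_lamb (H.cf2 hq) ((H.cν2 hq).of_le (by norm_num))

lemma fderiv_apply_field {G : (Fin m → ℝ) → ((Fin m → ℝ) →L[ℝ] (Fin (m + 1) → ℝ))}
    {V : (Fin m → ℝ) → (Fin m → ℝ)}
    (hG : DifferentiableAt ℝ G q) (hV : DifferentiableAt ℝ V q) (Z : Fin m → ℝ) :
    fderiv ℝ (fun x => G x (V x)) q Z = fderiv ℝ G q Z (V q) + G q (fderiv ℝ V q Z) := by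
  rw [fderiv_clm_apply hG hV]
  simp [add_comm]

lemma fderiv_apply_const {G : (Fin m → ℝ) → ((Fin m → ℝ) →L[ℝ] (Fin (m + 1) → ℝ))}
    (V : Fin m → ℝ) (hG : DifferentiableAt ℝ G q) (Z : Fin m → ℝ) :
    fderiv ℝ (fun x => G x V) q Z = fderiv ℝ G q Z V := by
  rw [fderiv_clm_apply hG (differentiableAt_const _)]
  simp

lemma dApp {G : (Fin m → ℝ) → ((Fin m → ℝ) →L[ℝ] (Fin (m + 1) → ℝ))}
    (V : Fin m → ℝ) (hG : DifferentiableAt ℝ G q) : DifferentiableAt ℝ (fun x => G x V) q :=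
  hG.clm_apply (differentiableAt_const _)

lemma FrontHyp.tan (H : FrontHyp U f ν) (hq : q ∈ U) (V : Fin m → ℝ) :
    fderiv ℝ f q V ⬝ᵥ ν q = 0 := by
  conv_lhs => rw [pi_eq_sum_univ' V]
  simp only [map_sum, map_smul, sum_dotProduct, smul_dotProduct]
  refine Finset.sum_eq_zero fun k _ => ?_
  have := H.htang q hq k
  unfold pd at this
  rw [this, smul_zero]

lemma FrontHyp.νN (H : FrontHyp U f ν) (hq : q ∈ U) (Z : Fin m → ℝ) :
    fderiv ℝ ν q Z ⬝ᵥ ν q = 0 := by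
  have h := (hasFDerivAt_dot (H.dν hq) (H.dν hq)).2 Z
  have e : (fun y => ν y ⬝ᵥ ν y) =ᶠ[𝓝 q] fun _ => (1 : ℝ) := by
    filter_upwards [H.hU.mem_nhds hq] with y hy using H.hν1 y hy
  rw [e.fderiv_eq, dotProduct_comm (ν q)] at h
  simp at h
  linarith

/-- derivative of the tangency relation along a field -/
lemma FrontHyp.tan_field (H : FrontHyp U f ν) (hq : q ∈ U) {V : (Fin m → ℝ) → (Fin m → ℝ)}
    (hV : DifferentiableAt ℝ V q) (Z : Fin m → ℝ) :
    fderiv ℝ (fun x => fderiv ℝ f x (V x)) q Z ⬝ᵥ ν q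
      + fderiv ℝ f q (V q) ⬝ᵥ fderiv ℝ ν q Z = 0 := by
  have h := (hasFDerivAt_dot (u := fun x => fderiv ℝ f x (V x)) ((H.dF hq).clm_apply hV)
    (H.dν hq)).2 Z
  have e : (fun y => fderiv ℝ f y (V y) ⬝ᵥ ν y) =ᶠ[𝓝 q] fun _ => (0 : ℝ) := by
    filter_upwards [H.hU.mem_nhds hq] with y hy using H.tan hy _
  rw [← h, e.fderiv_eq]
  simp

lemma FrontHyp.symA (H : FrontHyp U f ν) (hq : q ∈ U) (V Z : Fin m → ℝ) :
    fderiv ℝ (fderiv ℝ f) q V Z = fderiv ℝ (fderiv ℝ f) q Z V :=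
  ((H.cf2 hq).isSymmSndFDerivAt (by simp)).eq V Z

lemma FrontHyp.symB (H : FrontHyp U f ν) (hq : q ∈ U) (V Z : Fin m → ℝ) :
    fderiv ℝ (fderiv ℝ ν) q V Z = fderiv ℝ (fderiv ℝ ν) q Z V :=
  ((H.cν2 hq).isSymmSndFDerivAt (by simp)).eq V Z

lemma FrontHyp.sym (H : FrontHyp U f ν) (hq : q ∈ U) (V Z : Fin m → ℝ) :
    fderiv ℝ f q V ⬝ᵥ fderiv ℝ ν q Z = fderiv ℝ f q Z ⬝ᵥ fderiv ℝ ν q V := by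
  have h1 := H.tan_field hq (V := fun _ => V) (differentiableAt_const _) Z
  have h2 := H.tan_field hq (V := fun _ => Z) (differentiableAt_const _) V
  rw [fderiv_apply_const _ (H.dF hq)] at h1 h2
  rw [H.symA hq] at h1
  linarith

/-- derivative of `⟨df V, dν W⟩`. -/
lemma FrontHyp.dh (H : FrontHyp U f ν) (hq : q ∈ U) (V W Z : Fin m → ℝ) :
    DifferentiableAt ℝ (fun x => fderiv ℝ f x V ⬝ᵥ fderiv ℝ ν x W) q ∧
    fderiv ℝ (fun x => fderiv ℝ f x V ⬝ᵥ fderiv ℝ ν x W) q Z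
      = fderiv ℝ (fderiv ℝ f) q Z V ⬝ᵥ fderiv ℝ ν q W
        + fderiv ℝ f q V ⬝ᵥ fderiv ℝ (fderiv ℝ ν) q Z W := by
  have h := hasFDerivAt_dot (dApp V (H.dF hq)) (dApp W (H.dN hq))
  refine ⟨h.1, ?_⟩
  rw [h.2 Z, fderiv_apply_const _ (H.dF hq), fderiv_apply_const _ (H.dN hq)]

lemma FrontHyp.dh_line (H : FrontHyp U f ν) (hq : q ∈ U) (V W Z : Fin m → ℝ) :
    HasDerivAt (fun t : ℝ => fderiv ℝ f (q + t • Z) V ⬝ᵥ fderiv ℝ ν (q + t • Z) W)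
      (fderiv ℝ (fderiv ℝ f) q Z V ⬝ᵥ fderiv ℝ ν q W
        + fderiv ℝ f q V ⬝ᵥ fderiv ℝ (fderiv ℝ ν) q Z W) 0 := by
  have h := H.dh hq V W Z
  rw [← h.2]
  exact h.1.hasFDerivAt.hasLineDerivAt Z

/-- on a tangential direction, the derivative of `h_XX` in the null direction -/
lemma FrontHyp.dhη (H : FrontHyp U f ν) (hq : q ∈ U) (X η : Fin m → ℝ)
    (hη : fderiv ℝ f q η = 0) :
    fderiv ℝ (fderiv ℝ f) q η X ⬝ᵥ fderiv ℝ ν q X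
        + fderiv ℝ f q X ⬝ᵥ fderiv ℝ (fderiv ℝ ν) q η X
      = 2 * (fderiv ℝ (fderiv ℝ f) q X η ⬝ᵥ fderiv ℝ ν q X)
        - fderiv ℝ (fderiv ℝ f) q X X ⬝ᵥ fderiv ℝ ν q η := by
  have h1 := (H.dh hq X η X).2
  have h2 := (H.dh hq η X X).2
  have e : (fun x => fderiv ℝ f x X ⬝ᵥ fderiv ℝ ν x η) =ᶠ[𝓝 q]
      fun x => fderiv ℝ f x η ⬝ᵥ fderiv ℝ ν x X := by
    filter_upwards [H.hU.mem_nhds hq] with y hy using H.sym hy _ _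
  rw [e.fderiv_eq, h2, hη, zero_dotProduct] at h1
  rw [H.symB hq η X, H.symA hq η X]
  linarith

lemma FrontHyp.line_reg (H : FrontHyp U f ν) (hq : q ∈ U) (_h0 : lamb f ν q = 0) (η : Fin m → ℝ)
    (hη : fderiv ℝ (lamb f ν) q η ≠ 0) :
    ∀ᶠ t in 𝓝[≠] (0 : ℝ), q + t • η ∈ U ∧ lamb f ν (q + t • η) ≠ 0 := by
  have h1 : HasDerivAt (fun t : ℝ => lamb f ν (q + t • η)) (fderiv ℝ (lamb f ν) q η) 0 :=
    ((H.clamb hq).differentiableAt (by simp)).hasFDerivAt.hasLineDerivAt η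
  have h2 : ∀ᶠ t in 𝓝[≠] (0 : ℝ), lamb f ν (q + t • η) ≠ 0 := by
    have := h1.eventually_ne hη (c := 0)
    simpa using this
  have hc : Continuous fun t : ℝ => q + t • η := by fun_prop
  have h3 : ∀ᶠ t in 𝓝 (0 : ℝ), q + t • η ∈ U :=
    hc.continuousAt.eventually_mem (H.hU.mem_nhds (by simpa using hq))
  exact (h3.filter_mono nhdsWithin_le_nhds).and h2

lemma FrontHyp.core (H : FrontHyp U f ν) (hq : q ∈ U) (h0 : lamb f ν q = 0)
    (η : Fin m → ℝ) (hη : fderiv ℝ f q η = 0) (hη0 : η ≠ 0) (n : Fin (m + 1) → ℝ)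
    (hdec : ∀ w : Fin (m + 1) → ℝ,
      (∀ Z : Fin m → ℝ, fderiv ℝ (lamb f ν) q Z = 0 → w ⬝ᵥ fderiv ℝ f q Z = 0) →
      w = (w ⬝ᵥ n) • n + (w ⬝ᵥ ν q) • ν q)
    {k : ℝ} (hk : 0 < k)
    (hdl : ∀ Z, fderiv ℝ (lamb f ν) q Z = k * (fderiv ℝ (fderiv ℝ f) q Z η ⬝ᵥ n)) :
    (∀ X Y : Fin m → ℝ, fderiv ℝ (lamb f ν) q X = 0 → fderiv ℝ (lamb f ν) q Y = 0 →
      fderiv ℝ f q X ⬝ᵥ fderiv ℝ ν q Y = 0) ∧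
    (∀ X Y : Fin m → ℝ, fderiv ℝ (lamb f ν) q X = 0 → fderiv ℝ (lamb f ν) q Y = 0 →
      LinearIndependent ℝ ![X, Y] →
      0 ≤ (fderiv ℝ (fderiv ℝ f) q X X ⬝ᵥ n) * (fderiv ℝ (fderiv ℝ f) q Y Y ⬝ᵥ n)) := by
  have hlη : fderiv ℝ (lamb f ν) q η ≠ 0 := (H.hallA2 q hq h0).2.2 η hη0 hη
  have hreg := H.line_reg hq h0 η hlη
  -- `dν η` is a nonzero multiple of `n`
  have hNη : fderiv ℝ ν q η = (fderiv ℝ ν q η ⬝ᵥ n) • n := by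
    have := hdec (fderiv ℝ ν q η) (fun Z _ => by
      rw [dotProduct_comm, H.sym hq, hη, zero_dotProduct])
    rw [H.νN hq, zero_smul, add_zero] at this
    exact this
  set b := fderiv ℝ ν q η ⬝ᵥ n with hb
  have hb0 : b ≠ 0 := by
    intro h
    rw [h, zero_smul] at hNη
    exact hη0 (H.hfront q hq η hη hNη)
  have ha0 : fderiv ℝ (fderiv ℝ f) q η η ⬝ᵥ n ≠ 0 := by
    intro h
    apply hlη
    rw [hdl, h, mul_zero]
  -- vanishing of the second fundamental form
  have hII : ∀ X : Fin m → ℝ, fderiv ℝ (lamb f ν) q X = 0 →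
      fderiv ℝ f q X ⬝ᵥ fderiv ℝ ν q X = 0 := by
    intro X hX
    by_cases hX0 : X = 0
    · simp [hX0]
    have hli : LinearIndependent ℝ ![X, η] := by
      rw [LinearIndependent.pair_iff]
      intro s t hst
      have h1 := congrArg (fderiv ℝ (lamb f ν) q) hst
      simp only [map_add, map_smul, hX, mul_zero, zero_add, map_zero, smul_eq_mul] at h1
      have ht : t = 0 := (mul_eq_zero.1 h1).resolve_right hlη
      subst ht
      simp only [zero_smul, add_zero, smul_eq_zero] at hst
      exact ⟨hst.resolve_right hX0, rfl⟩
    have d1 := H.dh_line hq X X η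
    have d2 := H.dh_line hq η η η
    have d3 := H.dh_line hq X η η
    have d := (d1.mul d2).sub (d3.pow 2)
    have hXη : fderiv ℝ f q X ⬝ᵥ fderiv ℝ ν q η = 0 := by
      rw [H.sym hq, hη, zero_dotProduct]
    have hmin : IsLocalMin (((fun t : ℝ => fderiv ℝ f (q + t • η) X ⬝ᵥ fderiv ℝ ν (q + t • η) X) *
        (fun t : ℝ => fderiv ℝ f (q + t • η) η ⬝ᵥ fderiv ℝ ν (q + t • η) η)) -
        (fun t : ℝ => fderiv ℝ f (q + t • η) X ⬝ᵥ fderiv ℝ ν (q + t • η) η) ^ 2) 0 := by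
      unfold IsLocalMin IsMinFilter
      rw [eventually_nhdsWithin_iff] at hreg
      filter_upwards [hreg] with t ht
      by_cases ht0 : t = 0
      · rw [ht0]
      · obtain ⟨hU', hl'⟩ := ht ht0
        have hp := H.hpos _ hU' hl' X η hli
        have := (Kext_num f ν _ X η hp le_rfl).1
        simp only [Pi.sub_apply, Pi.mul_apply, Pi.pow_apply, zero_smul, add_zero, hη,
          zero_dotProduct, hXη]
        simp only [mul_zero, ne_eq, OfNat.ofNat_ne_zero, not_false_eq_true, zero_pow, sub_zero]
        exact this.le
    have hz := hmin.hasDerivAt_eq_zero d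
    simp only [zero_smul, add_zero, hη, zero_dotProduct, hXη] at hz
    rw [hNη, dotProduct_smul, smul_eq_mul] at hz
    have hz' : (fderiv ℝ f q X ⬝ᵥ fderiv ℝ ν q X) *
        (b * (fderiv ℝ (fderiv ℝ f) q η η ⬝ᵥ n)) = 0 := by
      simpa using hz
    exact (mul_eq_zero.1 hz').resolve_right (mul_ne_zero hb0 ha0)
  have hII2 : ∀ X Y : Fin m → ℝ, fderiv ℝ (lamb f ν) q X = 0 → fderiv ℝ (lamb f ν) q Y = 0 →
      fderiv ℝ f q X ⬝ᵥ fderiv ℝ ν q Y = 0 := by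
    intro X Y hX hY
    have h1 := hII (X + Y) (by rw [map_add, hX, hY, add_zero])
    simp only [map_add, add_dotProduct, dotProduct_add] at h1
    rw [hII X hX, hII Y hY, H.sym hq Y X] at h1
    linarith
  refine ⟨hII2, fun X Y hX hY hli => ?_⟩
  have hder : ∀ X : Fin m → ℝ, fderiv ℝ (lamb f ν) q X = 0 →
      fderiv ℝ (fderiv ℝ f) q η X ⬝ᵥ fderiv ℝ ν q X
        + fderiv ℝ f q X ⬝ᵥ fderiv ℝ (fderiv ℝ ν) q η X
      = - b * (fderiv ℝ (fderiv ℝ f) q X X ⬝ᵥ n) := by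
    intro X hX
    have hNX : fderiv ℝ ν q X = (fderiv ℝ ν q X ⬝ᵥ n) • n := by
      have := hdec (fderiv ℝ ν q X) (fun Z hZ => by
        rw [dotProduct_comm]; exact hII2 Z X hZ hX)
      rw [H.νN hq, zero_smul, add_zero] at this
      exact this
    have hXη : fderiv ℝ (fderiv ℝ f) q X η ⬝ᵥ n = 0 := by
      have := hdl X
      rw [hX] at this
      exact (mul_eq_zero.1 this.symm).resolve_left hk.ne'
    rw [H.dhη hq X η hη, hNX, hNη, dotProduct_smul, dotProduct_smul, hXη]
    simp
  have lim : ∀ V W : Fin m → ℝ, fderiv ℝ (lamb f ν) q V = 0 → fderiv ℝ (lamb f ν) q W = 0 →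
      Tendsto (fun t : ℝ => t⁻¹ *
        (fderiv ℝ f (q + t • η) V ⬝ᵥ fderiv ℝ ν (q + t • η) W)) (𝓝[≠] 0)
      (𝓝 (fderiv ℝ (fderiv ℝ f) q η V ⬝ᵥ fderiv ℝ ν q W
        + fderiv ℝ f q V ⬝ᵥ fderiv ℝ (fderiv ℝ ν) q η W)) := by
    intro V W hV hW
    have := hasDerivAt_iff_tendsto_slope_zero.1 (H.dh_line hq V W η)
    simpa [hII2 V W hV hW] using this
  have hl := ((lim X X hX hX).mul (lim Y Y hY hY)).sub ((lim X Y hX hY).pow 2)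
  have hge := ge_of_tendsto (b := 0) hl (by
    filter_upwards [hreg] with t ht
    have hp := H.hpos _ ht.1 ht.2 X Y hli
    have h1 := (Kext_num f ν _ X Y hp le_rfl).1
    have : ∀ s a b c : ℝ, s * a * (s * b) - (s * c) ^ 2 = s ^ 2 * (a * b - c ^ 2) := by
      intros; ring
    rw [this]
    positivity)
  rw [hder X hX, hder Y hY] at hge
  have h2 : 0 ≤ b ^ 2 *
      ((fderiv ℝ (fderiv ℝ f) q X X ⬝ᵥ n) * (fderiv ℝ (fderiv ℝ f) q Y Y ⬝ᵥ n)) := by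
    nlinarith [sq_nonneg (fderiv ℝ (fderiv ℝ f) q η X ⬝ᵥ fderiv ℝ ν q Y
        + fderiv ℝ f q X ⬝ᵥ fderiv ℝ (fderiv ℝ ν) q η Y)]
  exact nonneg_of_mul_nonneg_right h2 (by positivity)

lemma FrontHyp.no_delta (H : FrontHyp U f ν) (hq : q ∈ U) (h0 : lamb f ν q = 0)
    (η : Fin m → ℝ) (hlη : fderiv ℝ (lamb f ν) q η ≠ 0)
    (X Y : Fin m → ℝ) (hli : LinearIndependent ℝ ![X, Y])
    (hXX : fderiv ℝ f q X ⬝ᵥ fderiv ℝ ν q X = 0)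
    (hYY : fderiv ℝ f q Y ⬝ᵥ fderiv ℝ ν q Y = 0)
    (h1 : fderiv ℝ f q X ⬝ᵥ fderiv ℝ f q X = 1)
    (h2 : fderiv ℝ f q Y ⬝ᵥ fderiv ℝ f q Y = 1)
    (h3 : fderiv ℝ f q X ⬝ᵥ fderiv ℝ f q Y = 0) {δ : ℝ} (hδ : 0 < δ)
    (hK : ∀ x ∈ U, lamb f ν x ≠ 0 → ∀ Z Z' : Fin m → ℝ,
              LinearIndependent ℝ ![Z, Z'] → δ ≤ Kext f ν x Z Z') : False := by
  have hreg := H.line_reg hq h0 η hlη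
  have cl : ∀ G G' : (Fin m → ℝ) → ((Fin m → ℝ) →L[ℝ] (Fin (m + 1) → ℝ)),
      DifferentiableAt ℝ G q → DifferentiableAt ℝ G' q → ∀ V W : Fin m → ℝ,
      Tendsto (fun t : ℝ => G (q + t • η) V ⬝ᵥ G' (q + t • η) W) (𝓝[≠] 0)
        (𝓝 (G q V ⬝ᵥ G' q W)) := by
    intro G G' hG hG' V W
    have h := (hasFDerivAt_dot (dApp V hG) (dApp W hG')).1.continuousAt
    have hc : Tendsto (fun t : ℝ => q + t • η) (𝓝[≠] 0) (𝓝 q) := by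
      have : Continuous fun t : ℝ => q + t • η := by fun_prop
      have := this.tendsto 0
      rw [zero_smul, add_zero] at this
      exact this.mono_left nhdsWithin_le_nhds
    exact h.tendsto.comp hc
  have dF := H.dF hq
  have dN := H.dN hq
  have l1 := ((cl _ _ dF dN X X).mul (cl _ _ dF dN Y Y)).sub ((cl _ _ dF dN X Y).pow 2)
  have l2 := (((cl _ _ dF dF X X).mul (cl _ _ dF dF Y Y)).sub
    ((cl _ _ dF dF X Y).pow 2)).const_mul δ
  have := le_of_tendsto_of_tendsto l2 l1 (by
    filter_upwards [hreg] with t ht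
    exact (Kext_num f ν _ X Y (H.hpos _ ht.1 ht.2 X Y hli) (hK _ ht.1 ht.2 X Y hli)).2)
  rw [hXX, hYY, h1, h2, h3] at this
  nlinarith [sq_nonneg (fderiv ℝ f q X ⬝ᵥ fderiv ℝ ν q Y)]

/-- the shape equation, differentiated -/
lemma FrontHyp.shape (H : FrontHyp U f ν) (hq : q ∈ U) (h0 : lamb f ν q = 0)
    {W W' : Set (Fin m → ℝ)} (hW : IsOpen W) (hqW : q ∈ W) (hW' : IsOpen W') (hqW' : q ∈ W')
    {n : (Fin m → ℝ) → (Fin (m + 1) → ℝ)} (hn : ContDiffOn ℝ (⊤ : ℕ∞) n W')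
    (hnT : ∀ q ∈ W', lamb f ν q = 0 →
      ∀ Z : Fin m → ℝ, fderiv ℝ (lamb f ν) q Z = 0 → n q ⬝ᵥ fderiv ℝ f q Z = 0)
    {V : (Fin m → ℝ) → (Fin m → ℝ)} (hV : ContDiffOn ℝ (⊤ : ℕ∞) V W)
    (hVT : ∀ x ∈ W, lamb f ν x = 0 → fderiv ℝ (lamb f ν) x (V x) = 0)
    (X : Fin m → ℝ) (hX : fderiv ℝ (lamb f ν) q X = 0) {s : ℝ}
    (hs : fderiv ℝ n q X - (fderiv ℝ n q X ⬝ᵥ ν q) • ν q = s • fderiv ℝ f q X) :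
    fderiv ℝ (fun x => fderiv ℝ f x (V x)) q X ⬝ᵥ n q
      = - s * (fderiv ℝ f q X ⬝ᵥ fderiv ℝ f q (V q)) := by
  have cn : ContDiffAt ℝ 1 n q :=
    (hn.contDiffAt (hW'.mem_nhds hqW')).of_le (by exact_mod_cast le_top)
  have cV : ContDiffAt ℝ 1 V q :=
    (hV.contDiffAt (hW.mem_nhds hqW)).of_le (by exact_mod_cast le_top)
  have cFV : ContDiffAt ℝ 1 (fun x => fderiv ℝ f x (V x)) q := (H.cF hq).clm_apply cV
  have hz := fderiv_zero_of_level (H.clamb hq) (contDiffAt_dot_s15 cn cFV) h0 (H.hallA2 q hq h0).2.1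
    (by
      filter_upwards [hW.mem_nhds hqW, hW'.mem_nhds hqW'] with y hy hy' hl
      exact hnT y hy' hl _ (hVT y hy hl)) X hX
  rw [(hasFDerivAt_dot (cn.differentiableAt (by simp)) (cFV.differentiableAt (by simp))).2] at hz
  have h1 := congrArg (fun w => w ⬝ᵥ fderiv ℝ f q (V q)) hs
  simp only [sub_dotProduct, smul_dotProduct, smul_eq_mul] at h1
  rw [dotProduct_comm (ν q), H.tan hq] at h1
  rw [dotProduct_comm]
  linarith

end

end helpers

open Matrix

/-- For a front `(f, ν)` in `ℝ^{m+1}` (`m ≥ 3`) all of whose singular points are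
`A₂`-points and whose extrinsic curvature is positive off the singular set, the sectional
curvature of the singular submanifold at a plane spanned by two `I`-orthonormal singular
principal directions `X, Y` (computed by the Gauss equation of the immersion `f|_Σ` via
the second fundamental form `α`) equals the product `κ_X κ_Y` of the corresponding
singular principal curvatures and is non-negative; if moreover `K^ext ≥ δ > 0`, it is
strictly positive. -/
theorem sectional_curvature_singular_submanifold {m : ℕ} (hm : 3 ≤ m)
    (U : Set (Fin m → ℝ)) (hU : IsOpen U)
    (f ν : (Fin m → ℝ) → (Fin (m + 1) → ℝ))
    (hf : ContDiffOn ℝ (⊤ : ℕ∞) f U) (hν : ContDiffOn ℝ (⊤ : ℕ∞) ν U)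
    (hν1 : ∀ q ∈ U, ν q ⬝ᵥ ν q = 1)
    (htang : ∀ q ∈ U, ∀ k : Fin m, pd k f q ⬝ᵥ ν q = 0)
    (hfront : ∀ q ∈ U, ∀ X : Fin m → ℝ, fderiv ℝ f q X = 0 → fderiv ℝ ν q X = 0 → X = 0)
    (hallA2 : ∀ q ∈ U, lamb f ν q = 0 → IsA2 f ν q)
    (hpos : ∀ q ∈ U, lamb f ν q ≠ 0 → ∀ X Y : Fin m → ℝ,
      LinearIndependent ℝ ![X, Y] → 0 < Kext f ν q X Y) :
    ∀ q ∈ U, lamb f ν q = 0 →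
    ∀ (κX κY : ℝ) (X Y : Fin m → ℝ),
      IsSingPrincCurvVec f ν q κX X → IsSingPrincCurvVec f ν q κY Y →
      fderiv ℝ f q X ⬝ᵥ fderiv ℝ f q X = 1 →
      fderiv ℝ f q Y ⬝ᵥ fderiv ℝ f q Y = 1 →
      fderiv ℝ f q X ⬝ᵥ fderiv ℝ f q Y = 0 →
      ∀ (Xf Yf : (Fin m → ℝ) → (Fin m → ℝ)) (W : Set (Fin m → ℝ)),
        IsOpen W → q ∈ W → W ⊆ U →
        ContDiffOn ℝ (⊤ : ℕ∞) Xf W → ContDiffOn ℝ (⊤ : ℕ∞) Yf W →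
        Xf q = X → Yf q = Y →
        (∀ x ∈ W, lamb f ν x = 0 →
          fderiv ℝ (lamb f ν) x (Xf x) = 0 ∧ fderiv ℝ (lamb f ν) x (Yf x) = 0) →
        ∀ aXX aXY aYY : Fin (m + 1) → ℝ,
          IsNormalPart f ν q (fderiv ℝ (fun x => fderiv ℝ f x (Xf x)) q X) aXX →
          IsNormalPart f ν q (fderiv ℝ (fun x => fderiv ℝ f x (Yf x)) q X) aXY →
          IsNormalPart f ν q (fderiv ℝ (fun x => fderiv ℝ f x (Yf x)) q Y) aYY →
          (aXX ⬝ᵥ aYY - aXY ⬝ᵥ aXY = κX * κY ∧ 0 ≤ aXX ⬝ᵥ aYY - aXY ⬝ᵥ aXY) ∧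
          ((∃ δ : ℝ, 0 < δ ∧ ∀ x ∈ U, lamb f ν x ≠ 0 → ∀ Z Z' : Fin m → ℝ,
              LinearIndependent ℝ ![Z, Z'] → δ ≤ Kext f ν x Z Z') →
            0 < aXX ⬝ᵥ aYY - aXY ⬝ᵥ aXY) := by
  intro q hq h0 κX κY X Y hSX hSY h1 h2 h3 Xf Yf W hW hqW hWU hXf hYf hXq hYq hT aXX aXY aYY
    nXX nXY nYY
  have H : FrontHyp U f ν := ⟨hU, hf, hν, hν1, htang, hfront, hallA2, hpos⟩
  obtain ⟨hX0, hXT, W₁, n₁, c₁, η₁, oW₁, qW₁, sn₁, pn₁, zη₁, nη₁, tc₁, -, pC₁, pB₁, eq₁⟩ := hSX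
  obtain ⟨hY0, hYT, W₂, n₂, c₂, η₂, oW₂, qW₂, sn₂, pn₂, zη₂, nη₂, tc₂, -, pC₂, pB₂, eq₂⟩ := hSY
  obtain ⟨nn₁, nν₁, nT₁⟩ := pn₁ q qW₁ h0
  obtain ⟨nn₂, nν₂, nT₂⟩ := pn₂ q qW₂ h0
  have cν1 : ContDiffAt ℝ 1 ν q := (H.cν2 hq).of_le (by norm_num)
  obtain ⟨dec₁, k₁, hk₁, dl₁⟩ := frame_data hm (H.cf2 hq) cν1 η₁ c₁ (n₁ q) (hν1 q hq) nn₁ nν₁ nT₁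
    (H.tan hq) zη₁ tc₁ pC₁ pB₁
  obtain ⟨dec₂, k₂, hk₂, dl₂⟩ := frame_data hm (H.cf2 hq) cν1 η₂ c₂ (n₂ q) (hν1 q hq) nn₂ nν₂ nT₂
    (H.tan hq) zη₂ tc₂ pC₂ pB₂
  have hlη₁ : fderiv ℝ (lamb f ν) q η₁ ≠ 0 := (hallA2 q hq h0).2.2 η₁ nη₁ zη₁
  have hlη₂ : fderiv ℝ (lamb f ν) q η₂ ≠ 0 := (hallA2 q hq h0).2.2 η₂ nη₂ zη₂
  obtain ⟨hII, hsec⟩ := H.core hq h0 η₁ zη₁ nη₁ (n₁ q) dec₁ hk₁ dl₁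
  have hli : LinearIndependent ℝ ![X, Y] := by
    rw [LinearIndependent.pair_iff]
    intro s t hst
    have e := congrArg (fderiv ℝ f q) hst
    simp only [map_add, map_smul, map_zero] at e
    have e1 := congrArg (fun w => fderiv ℝ f q X ⬝ᵥ w) e
    have e2 := congrArg (fun w => w ⬝ᵥ fderiv ℝ f q Y) e
    simp only [dotProduct_add, dotProduct_smul, add_dotProduct, smul_dotProduct, h1, h2, h3,
      dotProduct_zero, zero_dotProduct, smul_eq_mul] at e1 e2
    constructor <;> linarith
  have hsec' := hsec X Y hXT hYT hli
  -- differentiability of the fields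
  have dX : DifferentiableAt ℝ Xf q :=
    (hXf.contDiffAt (hW.mem_nhds hqW)).differentiableAt (by simp)
  have dY : DifferentiableAt ℝ Yf q :=
    (hYf.contDiffAt (hW.mem_nhds hqW)).differentiableAt (by simp)
  have nall₁ : ∀ Z, fderiv ℝ f q Z ⬝ᵥ n₁ q = 0 := by
    intro Z
    set c := fderiv ℝ (lamb f ν) q Z / fderiv ℝ (lamb f ν) q η₁ with hc
    have hz : fderiv ℝ (lamb f ν) q (Z - c • η₁) = 0 := by
      rw [map_sub, map_smul, smul_eq_mul, hc]
      field_simp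
      ring
    have := nT₁ _ hz
    rw [map_sub, map_smul, zη₁, smul_zero, sub_zero] at this
    rw [dotProduct_comm]; exact this
  -- the normal parts
  have key : ∀ (V : (Fin m → ℝ) → (Fin m → ℝ)) (Z : Fin m → ℝ) (a nn : Fin (m + 1) → ℝ),
      DifferentiableAt ℝ V q → fderiv ℝ (lamb f ν) q Z = 0 → fderiv ℝ (lamb f ν) q (V q) = 0 →
      (∀ w : Fin (m + 1) → ℝ,
        (∀ Z : Fin m → ℝ, fderiv ℝ (lamb f ν) q Z = 0 → w ⬝ᵥ fderiv ℝ f q Z = 0) →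
        w = (w ⬝ᵥ nn) • nn + (w ⬝ᵥ ν q) • ν q) →
      (∀ Z : Fin m → ℝ, fderiv ℝ (lamb f ν) q Z = 0 → nn ⬝ᵥ fderiv ℝ f q Z = 0) →
      IsNormalPart f ν q (fderiv ℝ (fun x => fderiv ℝ f x (V x)) q Z) a →
      a = (fderiv ℝ (fun x => fderiv ℝ f x (V x)) q Z ⬝ᵥ nn) • nn := by
    intro V Z a nn dV hZ hVq dec hnn ha
    obtain ⟨ha1, Z', hZ', ha2⟩ := ha
    have e1 : a ⬝ᵥ ν q = 0 := by
      have := H.tan_field hq dV Z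
      rw [hII _ _ hVq hZ, add_zero] at this
      have e := congrArg (fun w => w ⬝ᵥ ν q) ha2
      simp only [sub_dotProduct, H.tan hq, this] at e
      linarith
    have e2 : a ⬝ᵥ nn = fderiv ℝ (fun x => fderiv ℝ f x (V x)) q Z ⬝ᵥ nn := by
      have e := congrArg (fun w => w ⬝ᵥ nn) ha2
      simp only [sub_dotProduct] at e
      rw [dotProduct_comm (fderiv ℝ f q Z'), hnn _ hZ'] at e
      linarith
    have := dec a ha1
    rw [e1, zero_smul, add_zero, e2] at this
    exact this
  have hXqT : fderiv ℝ (lamb f ν) q (Xf q) = 0 := by rw [hXq]; exact hXT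
  have hYqT : fderiv ℝ (lamb f ν) q (Yf q) = 0 := by rw [hYq]; exact hYT
  have kXX := key Xf X aXX (n₁ q) dX hXT hXqT dec₁ nT₁ nXX
  have kXY := key Yf X aXY (n₁ q) dY hXT hYqT dec₁ nT₁ nXY
  have kYY1 := key Yf Y aYY (n₁ q) dY hYT hYqT dec₁ nT₁ nYY
  have kYY2 := key Yf Y aYY (n₂ q) dY hYT hYqT dec₂ nT₂ nYY
  have sXX := H.shape hq h0 hW hqW oW₁ qW₁ sn₁ (fun x hx hl => (pn₁ x hx hl).2.2) hXf
    (fun x hx hl => (hT x hx hl).1) X hXT eq₁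
  have sXY := H.shape hq h0 hW hqW oW₁ qW₁ sn₁ (fun x hx hl => (pn₁ x hx hl).2.2) hYf
    (fun x hx hl => (hT x hx hl).2) X hXT eq₁
  have sYY := H.shape hq h0 hW hqW oW₂ qW₂ sn₂ (fun x hx hl => (pn₂ x hx hl).2.2) hYf
    (fun x hx hl => (hT x hx hl).2) Y hYT eq₂
  rw [hXq, h1] at sXX
  rw [hYq, h3, mul_zero] at sXY
  rw [hYq, h2] at sYY
  have hXY0 : aXY = 0 := by rw [kXY, sXY, zero_smul]
  -- the sign relation
  obtain ⟨c, hc⟩ : ∃ c : ℝ, η₂ = c • η₁ := by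
    refine ⟨fderiv ℝ (lamb f ν) q η₂ / fderiv ℝ (lamb f ν) q η₁, ?_⟩
    by_contra hne
    refine (hallA2 q hq h0).2.2 _ (sub_ne_zero.2 hne) ?_ ?_
    · rw [map_sub, map_smul, zη₁, zη₂, smul_zero, sub_zero]
    · rw [map_sub, map_smul, smul_eq_mul]
      field_simp
      ring
  have hc0 : c ≠ 0 := by
    rintro rfl
    exact nη₂ (by rw [hc, zero_smul])
  have hnn : n₂ q = (n₂ q ⬝ᵥ n₁ q) • n₁ q := by
    have := dec₁ (n₂ q) nT₂
    rw [nν₂, zero_smul, add_zero] at this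
    exact this
  set ε := n₂ q ⬝ᵥ n₁ q with hε
  have hε2 : ε * ε = 1 := by
    have := nn₂
    rw [hnn, smul_dotProduct, dotProduct_smul, nn₁] at this
    simpa using this
  set a := fderiv ℝ (fderiv ℝ f) q η₁ η₁ ⬝ᵥ n₁ q with hadef
  have hl1 : fderiv ℝ (lamb f ν) q η₁ = k₁ * a := dl₁ η₁
  have hl2 : fderiv ℝ (lamb f ν) q η₂ = k₂ * (c ^ 2 * (ε * a)) := by
    rw [dl₂ η₂, hnn, hc]
    simp only [map_smul, _root_.smul_apply, smul_dotProduct, dotProduct_smul, smul_eq_mul]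
    rw [← hadef]
    ring
  have ha0 : a ≠ 0 := by
    intro h
    rw [h, mul_zero] at hl1
    exact hlη₁ hl1
  have hsign : Real.sign (fderiv ℝ (lamb f ν) q η₁) * Real.sign (fderiv ℝ (lamb f ν) q η₂) = ε := by
    have hc2 : 0 < c ^ 2 := by positivity
    rw [hl1, hl2]
    rcases mul_self_eq_one_iff.1 hε2 with e | e <;> rw [e] <;>
      rcases lt_or_gt_of_ne ha0 with h | h
    · rw [Real.sign_of_neg (mul_neg_of_pos_of_neg hk₁ h), Real.sign_of_neg
        (mul_neg_of_pos_of_neg hk₂ (mul_neg_of_pos_of_neg hc2 (by linarith)))]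
      norm_num
    · rw [Real.sign_of_pos (mul_pos hk₁ h), Real.sign_of_pos
        (mul_pos hk₂ (mul_pos hc2 (by linarith)))]
      norm_num
    · rw [Real.sign_of_neg (mul_neg_of_pos_of_neg hk₁ h), Real.sign_of_pos
        (mul_pos hk₂ (mul_pos hc2 (by linarith)))]
      norm_num
    · rw [Real.sign_of_pos (mul_pos hk₁ h), Real.sign_of_neg
        (mul_neg_of_pos_of_neg hk₂ (mul_neg_of_pos_of_neg hc2 (by linarith)))]
      norm_num
  have hn12 : n₁ q ⬝ᵥ n₂ q = ε := by rw [hε, dotProduct_comm]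
  have hval : aXX ⬝ᵥ aYY - aXY ⬝ᵥ aXY = κX * κY := by
    rw [hXY0, kXX, kYY2, sXX, sYY, smul_dotProduct, dotProduct_smul, hn12, dotProduct_zero,
      sub_zero, smul_eq_mul, smul_eq_mul, mul_one, mul_one]
    calc _ = (Real.sign (fderiv ℝ (lamb f ν) q η₁) * Real.sign (fderiv ℝ (lamb f ν) q η₂)) *
        ε * (κX * κY) := by ring
      _ = κX * κY := by rw [hsign, hε2, one_mul]
  have hnonneg : 0 ≤ aXX ⬝ᵥ aYY - aXY ⬝ᵥ aXY := by
    have e1 : fderiv ℝ (fun x => fderiv ℝ f x (Xf x)) q X ⬝ᵥ n₁ q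
        = fderiv ℝ (fderiv ℝ f) q X X ⬝ᵥ n₁ q := by
      rw [fderiv_apply_field (H.dF hq) dX, add_dotProduct, nall₁, add_zero, hXq]
    have e2 : fderiv ℝ (fun x => fderiv ℝ f x (Yf x)) q Y ⬝ᵥ n₁ q
        = fderiv ℝ (fderiv ℝ f) q Y Y ⬝ᵥ n₁ q := by
      rw [fderiv_apply_field (H.dF hq) dY, add_dotProduct, nall₁, add_zero, hYq]
    rw [hXY0, kXX, kYY1, e1, e2, smul_dotProduct, dotProduct_smul, nn₁, dotProduct_zero,
      sub_zero, smul_eq_mul, smul_eq_mul, mul_one]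
    exact hsec'
  refine ⟨⟨hval, hnonneg⟩, ?_⟩
  rintro ⟨δ, hδ, hK⟩
  exact (H.no_delta hq h0 η₁ hlη₁ X Y hli (hII X X hXT hXT) (hII Y Y hYT hYT) h1 h2 h3 hδ hK).elim
end
end

section
/- Let m ≥ 2, let U ⊆ ℝ^m be open, let (f, ν) be a frontal on U with values in ℝ^{m+1}, let p ∈ U be an A₂-point of f, and let X be a nonzero vector tangent at p to the singular hypersurface Σ. Then there exist an open set V ⊆ ℝ^m with coordinates (u_1,…,u_m), a point o ∈ V, and a diffeomorphism Φ from V onto an open neighborhood of p in U with Φ(o) = p such that, writing f̃ := f∘Φ and ν̃ := ν∘Φ: (1) Φ^{−1}(Σ) = {u ∈ V : u_m = 0}; (2) dΦ_o(∂_1) = X; (3) ∂_m f̃ = 0 at every point of {u_m = 0} (i.e. ∂_m is a null vector field along the singular set); and (4) ⟨∂_j f̃, ∂_m ∂_m f̃⟩ = 0 at o for every j = 1,…,m−1. -/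
open scoped Matrix

noncomputable section

open Set Filter Topology

/-- Inverse function theorem, smooth version on open sets. -/
theorem exists_local_diffeo {m : ℕ} (g : (Fin m → ℝ) → (Fin m → ℝ)) (W : Set (Fin m → ℝ))
    (hW : IsOpen W) (a : Fin m → ℝ) (ha : a ∈ W) (hg : ContDiffOn ℝ (⊤ : ℕ∞) g W)
    (A : (Fin m → ℝ) ≃L[ℝ] (Fin m → ℝ))
    (hA : HasFDerivAt g (A : (Fin m → ℝ) →L[ℝ] (Fin m → ℝ)) a) :
    ∃ (V : Set (Fin m → ℝ)) (Ψ : (Fin m → ℝ) → (Fin m → ℝ)), IsOpen V ∧ a ∈ V ∧ V ⊆ W ∧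
      IsOpen (g '' V) ∧ ContDiffOn ℝ (⊤ : ℕ∞) Ψ (g '' V) ∧ ∀ x ∈ V, Ψ (g x) = x := by
  have hga : ContDiffAt ℝ (⊤ : ℕ∞) g a := hg.contDiffAt (hW.mem_nhds ha)
  have hn : ((⊤ : ℕ∞) : WithTop ℕ∞) ≠ 0 := by simp
  set e := hga.toOpenPartialHomeomorph g hA hn with he
  have hec : (e : (Fin m → ℝ) → (Fin m → ℝ)) = g := rfl
  have hcont : ContinuousOn (fderiv ℝ g) W := hg.continuousOn_fderiv_of_isOpen hW (by simp)
  have hop : IsOpen (W ∩ fderiv ℝ g ⁻¹' (range ((↑) : ((Fin m → ℝ) ≃L[ℝ] (Fin m → ℝ)) →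
      ((Fin m → ℝ) →L[ℝ] (Fin m → ℝ))))) :=
    hcont.isOpen_inter_preimage hW ContinuousLinearEquiv.isOpen
  set N := W ∩ fderiv ℝ g ⁻¹' (range ((↑) : ((Fin m → ℝ) ≃L[ℝ] (Fin m → ℝ)) →
      ((Fin m → ℝ) →L[ℝ] (Fin m → ℝ)))) with hN
  have haN : a ∈ N := ⟨ha, by simp [hA.fderiv]⟩
  have hae : a ∈ e.source := hga.mem_toOpenPartialHomeomorph_source hA hn
  refine ⟨e.source ∩ N, e.symm, e.open_source.inter hop, ⟨hae, haN⟩, fun x hx => hx.2.1, ?_, ?_, ?_⟩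
  · rw [← hec]
    exact e.isOpen_image_of_subset_source (e.open_source.inter hop) inter_subset_left
  · rintro _ ⟨x, ⟨hx, hxW, B, hB⟩, rfl⟩
    apply ContDiffAt.contDiffWithinAt
    have hxs : e.symm (g x) = x := e.left_inv hx
    have hgx : ContDiffAt ℝ (⊤ : ℕ∞) g x := hg.contDiffAt (hW.mem_nhds hxW)
    refine e.contDiffAt_symm (f₀' := B) (e.map_source hx) ?_ ?_
    · rw [hxs, hB]
      exact (hgx.differentiableAt hn).hasFDerivAt
    · rw [hxs]; exact hgx
  · intro x hx
    exact e.left_inv hx.1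

/-- Normal equations. -/
theorem exists_normal_solution {m N : ℕ} (T : (Fin m → ℝ) →L[ℝ] (Fin N → ℝ)) (b : Fin N → ℝ) :
    ∃ Y : Fin m → ℝ, ∀ v, T v ⬝ᵥ (b + T Y) = 0 := by
  let T' : (Fin m → ℝ) →ₗ[ℝ] EuclideanSpace ℝ (Fin N) :=
    (WithLp.linearEquiv 2 ℝ (Fin N → ℝ)).symm.toLinearMap ∘ₗ T.toLinearMap
  let K := LinearMap.range T'
  let b' : EuclideanSpace ℝ (Fin N) := WithLp.toLp 2 b
  obtain ⟨Y, hY⟩ : K.starProjection b' ∈ LinearMap.range T' := K.starProjection_apply_mem b'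
  refine ⟨-Y, fun v => ?_⟩
  have h := K.starProjection_inner_eq_zero b' (T' v) ⟨v, rfl⟩
  rw [← hY] at h
  have : b + T (-Y) = (b' - T' Y).ofLp := by
    simp [b', T', sub_eq_add_neg]
  rw [this]
  rw [EuclideanSpace.inner_eq_star_dotProduct] at h
  simpa [T'] using h

/-- Adapted linear coordinates. -/
theorem exists_linear_coords {m : ℕ} (z l : Fin m) (hzl : z ≠ l)
    (ℓ : (Fin m → ℝ) →L[ℝ] ℝ) (X e : Fin m → ℝ) (hX : X ≠ 0) (hlX : ℓ X = 0) (hle : ℓ e = 1) :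
    ∃ A : (Fin m → ℝ) ≃L[ℝ] (Fin m → ℝ), A (Pi.single z 1) = X ∧ A (Pi.single l 1) = e ∧
      ∀ v, ℓ (A v) = v l := by
  obtain ⟨B, hB⟩ := SeparatingDual.exists_continuousLinearEquiv_apply_eq (R := ℝ)
    (x := (Pi.single z 1 : Fin m → ℝ)) (y := X) (by simp) hX
  obtain ⟨k, hk⟩ : ∃ k, ℓ (B (Pi.single k 1)) ≠ 0 := by
    by_contra! h
    have : (ℓ.comp (B : (Fin m → ℝ) →L[ℝ] (Fin m → ℝ))) = 0 := by
      apply ContinuousLinearMap.coe_injective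
      apply (Pi.basisFun ℝ (Fin m)).ext
      intro i; simpa using h i
    have h2 := DFunLike.congr_fun this (B.symm e)
    simp [hle] at h2
  have hkz : k ≠ z := by rintro rfl; rw [hB] at hk; exact hk hlX
  let S : (Fin m → ℝ) ≃L[ℝ] (Fin m → ℝ) :=
    (LinearEquiv.funCongrLeft ℝ ℝ (Equiv.swap k l)).toContinuousLinearEquiv
  have hS : ∀ i, S (Pi.single i 1) = Pi.single (Equiv.swap k l i) 1 := by
    intro i
    ext j
    simp only [S, LinearEquiv.coe_toContinuousLinearEquiv', LinearEquiv.funCongrLeft_apply,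
      LinearMap.funLeft_apply, Pi.single_apply]
    congr 1
    rw [eq_iff_iff, ← (Equiv.swap k l).apply_eq_iff_eq (x := Equiv.swap k l j)]
    simp
  let C := S.trans B
  have hCz : C (Pi.single z 1) = X := by
    simp [C, hS, Equiv.swap_apply_of_ne_of_ne hkz.symm hzl, hB]
  have hCl : ℓ (C (Pi.single l 1)) ≠ 0 := by simpa [C, hS] using hk
  set w := C (Pi.single l 1) with hw
  let P : (Fin m → ℝ) →ₗ[ℝ] (Fin m → ℝ) :=
    { toFun := fun v => C v - (ℓ (C v) / ℓ w) • w + v l • e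
      map_add' := by intro x y; ext; simp; ring
      map_smul' := by intro x y; ext; simp; ring }
  have hP : ∀ v, P v = C v - (ℓ (C v) / ℓ w) • w + v l • e := fun v => rfl
  have hℓ : ∀ v, ℓ (P v) = v l := by
    intro v; rw [hP]; simp [hle, hCl]
  have hinj : Function.Injective P := by
    rw [← LinearMap.ker_eq_bot, LinearMap.ker_eq_bot']
    intro v hv
    have h0 : v l = 0 := by rw [← hℓ v, hv]; simp
    rw [hP, h0] at hv
    have h1 : C v = C ((ℓ (C v) / ℓ w) • Pi.single l 1) := by
      rw [map_smul, ← hw]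
      simpa [sub_eq_zero] using hv
    have h2 := C.injective h1
    have h3 := congrFun h2 l
    rw [h0] at h3
    simp only [Pi.smul_apply, Pi.single_eq_same, smul_eq_mul, mul_one] at h3
    rw [← h3] at h2
    simpa using h2
  refine ⟨(LinearEquiv.ofInjectiveEndo P hinj).toContinuousLinearEquiv, ?_, ?_, ?_⟩
  · simp [hP, hCz, hlX, hzl.symm]
  · simp only [LinearEquiv.coe_toContinuousLinearEquiv', LinearEquiv.coe_ofInjectiveEndo]
    simp [hP, ← hw, hCl]
  · intro v; simpa using hℓ v

theorem contDiffOn_det {E : Type*} [NormedAddCommGroup E] [NormedSpace ℝ E] {n : ℕ}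
    {U : Set E} (M : E → Matrix (Fin n) (Fin n) ℝ)
    (h : ∀ i j, ContDiffOn ℝ (⊤ : ℕ∞) (fun q => M q i j) U) :
    ContDiffOn ℝ (⊤ : ℕ∞) (fun q => (M q).det) U := by
  simp only [Matrix.det_apply]
  refine ContDiffOn.sum fun σ _ => ?_
  refine ContDiffOn.const_smul _ ?_
  exact contDiffOn_prod fun i _ => h _ _

theorem fderiv_det_of_adjugate {E : Type*} [NormedAddCommGroup E] [NormedSpace ℝ E] {n : ℕ}
    (M : E → Matrix (Fin n) (Fin n) ℝ) (p : E)
    (h : ∀ i, DifferentiableAt ℝ (fun q => M q i) p) (hadj : (M p).adjugate = 0) :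
    fderiv ℝ (fun q => (M q).det) p = 0 := by
  let D : ContinuousMultilinearMap ℝ (fun _ : Fin n => (Fin n → ℝ)) ℝ :=
    { (Matrix.detRowAlternating (n := Fin n) (R := ℝ)).toMultilinearMap with
      cont := by
        change Continuous fun M : Matrix (Fin n) (Fin n) ℝ => M.det
        exact continuous_id.matrix_det }
  have h1 := HasFDerivAt.multilinear_comp D (g := fun i q => M q i) (x := p)
    (fun i => (h i).hasFDerivAt)
  have h2 : (fun q => D fun i => M q i) = fun q => (M q).det := rfl
  rw [h2] at h1
  rw [h1.fderiv]
  ext v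
  simp only [sum_apply, ContinuousLinearMap.comp_apply,
    zero_apply]
  refine Finset.sum_eq_zero fun i _ => ?_
  change ((M p).updateRow i _).det = 0
  rw [← Matrix.cramer_transpose_apply, Matrix.cramer_eq_adjugate_mulVec, ← Matrix.adjugate_transpose,
    hadj]
  simp

theorem contDiffOn_pd {m N : ℕ} {U : Set (Fin m → ℝ)} (hU : IsOpen U)
    (f : (Fin m → ℝ) → (Fin N → ℝ)) (hf : ContDiffOn ℝ (⊤ : ℕ∞) f U) (k : Fin m) :
    ContDiffOn ℝ (⊤ : ℕ∞) (pd k f) U :=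
  (hf.fderiv_of_isOpen hU (by simp)).clm_apply contDiffOn_const

/-- The matrix whose determinant is `lamb`. -/
def lmat {m : ℕ} (f ν : (Fin m → ℝ) → (Fin (m + 1) → ℝ)) (q : Fin m → ℝ) :
    Matrix (Fin (m + 1)) (Fin (m + 1)) ℝ :=
  Matrix.of (Fin.snoc (fun k : Fin m => pd k f q) (ν q))

theorem lmat_castSucc {m : ℕ} (f ν : (Fin m → ℝ) → (Fin (m + 1) → ℝ)) (q : Fin m → ℝ)
    (k : Fin m) : lmat f ν q k.castSucc = pd k f q := by
  funext j
  simp [lmat]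

theorem lmat_last {m : ℕ} (f ν : (Fin m → ℝ) → (Fin (m + 1) → ℝ)) (q : Fin m → ℝ) :
    lmat f ν q (Fin.last m) = ν q := by
  funext j
  simp [lmat]

theorem contDiffOn_lmat {m : ℕ} {U : Set (Fin m → ℝ)} (hU : IsOpen U)
    (f ν : (Fin m → ℝ) → (Fin (m + 1) → ℝ))
    (hf : ContDiffOn ℝ (⊤ : ℕ∞) f U) (hν : ContDiffOn ℝ (⊤ : ℕ∞) ν U) (i : Fin (m + 1)) :
    ContDiffOn ℝ (⊤ : ℕ∞) (fun q => lmat f ν q i) U := by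
  refine Fin.lastCases ?_ (fun k => ?_) i
  · simp only [lmat_last]; exact hν
  · simp only [lmat_castSucc]; exact contDiffOn_pd hU f hf k

theorem exists_null_field {m : ℕ} (U : Set (Fin m → ℝ)) (hU : IsOpen U)
    (f ν : (Fin m → ℝ) → (Fin (m + 1) → ℝ))
    (hf : ContDiffOn ℝ (⊤ : ℕ∞) f U) (hν : ContDiffOn ℝ (⊤ : ℕ∞) ν U)
    (hν1 : ∀ q ∈ U, ν q ⬝ᵥ ν q = 1)
    (htang : ∀ q ∈ U, ∀ k : Fin m, pd k f q ⬝ᵥ ν q = 0)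
    (p : Fin m → ℝ) (hp : p ∈ U) (h0 : lamb f ν p = 0) (hd : fderiv ℝ (lamb f ν) p ≠ 0) :
    ∃ η : (Fin m → ℝ) → (Fin m → ℝ), ContDiffOn ℝ (⊤ : ℕ∞) η U ∧ η p ≠ 0 ∧
      ∀ q ∈ U, lamb f ν q = 0 → fderiv ℝ f q (η q) = 0 := by
  have hM := contDiffOn_lmat hU f ν hf hν
  have hMij : ∀ i j, ContDiffOn ℝ (⊤ : ℕ∞) (fun q => lmat f ν q i j) U := fun i j =>
    (contDiffOn_pi.1 (hM i)) j
  have hadj : (lmat f ν p).adjugate ≠ 0 := by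
    intro h
    apply hd
    refine fderiv_det_of_adjugate (lmat f ν) p (fun i => ?_) h
    exact ((hM i).contDiffAt (hU.mem_nhds hp)).differentiableAt (by simp)
  obtain ⟨i, k, hik⟩ : ∃ i k, (lmat f ν p).adjugate i k ≠ 0 := by
    by_contra! h
    exact hadj (Matrix.ext h)
  have key : ∀ q ∈ U, lamb f ν q = 0 →
      (lmat f ν q).adjugate i (Fin.last m) = 0 ∧
      ∑ k : Fin m, (lmat f ν q).adjugate i k.castSucc • pd k f q = 0 := by
    intro q hq hl
    have h1 : (lmat f ν q).adjugate * lmat f ν q = 0 := by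
      rw [Matrix.adjugate_mul]
      change lamb f ν q • _ = _
      rw [hl, zero_smul]
    have h2 : ∑ k : Fin m, (lmat f ν q).adjugate i k.castSucc • pd k f q
        + (lmat f ν q).adjugate i (Fin.last m) • ν q = 0 := by
      ext j
      have := congrFun (congrFun h1 i) j
      rw [Matrix.mul_apply, Fin.sum_univ_castSucc] at this
      simpa [lmat_castSucc, lmat_last] using this
    have h3 := congrArg (fun v => v ⬝ᵥ ν q) h2
    simp only [add_dotProduct, sum_dotProduct, smul_dotProduct, htang q hq, hν1 q hq] at h3
    have h4 : (lmat f ν q).adjugate i (Fin.last m) = 0 := by simpa using h3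
    refine ⟨h4, ?_⟩
    rw [h4] at h2
    simpa using h2
  refine ⟨fun q k => (lmat f ν q).adjugate i k.castSucc, ?_, ?_, ?_⟩
  · rw [contDiffOn_pi]
    intro k
    simp only [Matrix.adjugate_apply]
    refine contDiffOn_det _ fun a b => ?_
    by_cases h : a = k.castSucc
    · subst h
      simp only [Matrix.updateRow_self]
      exact contDiffOn_const
    · simp only [Matrix.updateRow_ne h]
      exact hMij a b
  · intro h
    apply hik
    refine Fin.lastCases ?_ (fun k => ?_) k
    · exact (key p hp h0).1
    · exact congrFun h k
  · intro q hq hl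
    have h := (key q hq hl).2
    rw [← h, pi_eq_sum_univ' ((fun q (k : Fin m) => (lmat f ν q).adjugate i k.castSucc) q),
      map_sum]
    refine Finset.sum_congr rfl fun k _ => ?_
    rw [map_smul]
    rfl

theorem hasDerivAt_curve {E F : Type*} [NormedAddCommGroup E] [NormedSpace ℝ E]
    [NormedAddCommGroup F] [NormedSpace ℝ F] {g : E → F} {g' : E →L[ℝ] F} {a v : E} {c : ℝ → E}
    (h : HasFDerivAt g g' a) (hc : HasDerivAt c v 0) (hca : c 0 = a) :
    HasDerivAt (fun t : ℝ => g (c t)) (g' v) 0 := by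
  subst hca
  exact h.comp_hasDerivAt (0 : ℝ) hc

theorem coordinate_core {m : ℕ}
    (U : Set (Fin m → ℝ)) (hU : IsOpen U)
    (f : (Fin m → ℝ) → (Fin (m + 1) → ℝ))
    (hf : ContDiffOn ℝ (⊤ : ℕ∞) f U)
    (lam : (Fin m → ℝ) → ℝ) (hlam : ContDiffOn ℝ (⊤ : ℕ∞) lam U)
    (p : Fin m → ℝ) (hp : p ∈ U) (h0 : lam p = 0)
    (X : Fin m → ℝ) (hX0 : X ≠ 0)
    (η : (Fin m → ℝ) → (Fin m → ℝ)) (hηs : ContDiffOn ℝ (⊤ : ℕ∞) η U)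
    (hηn : ∀ q ∈ U, lam q = 0 → fderiv ℝ f q (η q) = 0)
    (ℓ : (Fin m → ℝ) →L[ℝ] ℝ) (hℓ : HasFDerivAt lam ℓ p) (hη1 : ℓ (η p) = 1)
    (hXtan : ℓ X = 0) (z l : Fin m) (hzl : z ≠ l) :
    ∃ (V : Set (Fin m → ℝ)) (o : Fin m → ℝ) (Φ Ψ : (Fin m → ℝ) → (Fin m → ℝ)),
      IsOpen V ∧ o ∈ V ∧ ContDiffOn ℝ (⊤ : ℕ∞) Φ V ∧
      IsOpen (Φ '' V) ∧ Φ '' V ⊆ U ∧ Φ o = p ∧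
      ContDiffOn ℝ (⊤ : ℕ∞) Ψ (Φ '' V) ∧
      (∀ x ∈ V, Ψ (Φ x) = x) ∧ (∀ y ∈ Φ '' V, Φ (Ψ y) = y) ∧
      (∀ x ∈ V, (lam (Φ x) = 0 ↔ x l = 0)) ∧
      fderiv ℝ Φ o (Pi.single z 1) = X ∧
      (∀ x ∈ V, x l = 0 → pd l (f ∘ Φ) x = 0) ∧
      (∀ j : Fin m, (j : ℕ) < m - 1 → pd j (f ∘ Φ) o ⬝ᵥ pd l (pd l (f ∘ Φ)) o = 0) := by
  have htop : ((⊤ : ℕ∞) : WithTop ℕ∞) ≠ 0 := by simp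
  obtain ⟨A, hAz, hAl, hAℓ⟩ := exists_linear_coords z l hzl ℓ X (η p) hX0 hXtan hη1
  obtain ⟨Y, hY⟩ := exists_normal_solution (fderiv ℝ f p)
    (fderiv ℝ (fderiv ℝ f) p (η p) (η p))
  set el : Fin m → ℝ := Pi.single l 1 with hel
  have hell : el l = 1 := by simp [hel]
  have hAsl : ∀ v, A.symm v l = ℓ v := fun v => by rw [← hAℓ (A.symm v)]; simp
  -- straightening the singular set
  let H : (Fin m → ℝ) → (Fin m → ℝ) := fun q => A.symm (q - p) + (lam q - ℓ (q - p)) • el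
  have hHl : ∀ q, H q l = lam q := fun q => by simp [H, hAsl, hell]
  have hHp : H p = 0 := by simp [H, h0]
  have hHs : ContDiffOn ℝ (⊤ : ℕ∞) H U := by
    have h1 : ContDiffOn ℝ (⊤ : ℕ∞) (fun q : Fin m → ℝ => q - p) U :=
      contDiffOn_id.sub contDiffOn_const
    exact (A.symm.contDiff.comp_contDiffOn h1).add
      ((hlam.sub (ℓ.contDiff.comp_contDiffOn h1)).smul contDiffOn_const)
  have hHd : HasFDerivAt H (A.symm : (Fin m → ℝ) →L[ℝ] (Fin m → ℝ)) p := by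
    have h1 : HasFDerivAt (fun q : Fin m → ℝ => q - p) (ContinuousLinearMap.id ℝ _) p :=
      (hasFDerivAt_id p).sub_const p
    have h2 : HasFDerivAt (fun q => A.symm (q - p))
        ((A.symm : (Fin m → ℝ) →L[ℝ] (Fin m → ℝ)).comp (ContinuousLinearMap.id ℝ _)) p :=
      HasFDerivAt.comp p A.symm.hasFDerivAt h1
    have h3 : HasFDerivAt (fun q => ℓ (q - p)) (ℓ.comp (ContinuousLinearMap.id ℝ _)) p :=
      HasFDerivAt.comp p ℓ.hasFDerivAt h1
    have h4 := h2.add ((hℓ.sub h3).smul_const el)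
    convert! h4 using 1
    ext1 v
    simp
  obtain ⟨V₀, G, hV₀, hpV₀, hV₀U, hT, hGs, hGH⟩ := exists_local_diffeo H U hU p hp hHs A.symm hHd
  set T := H '' V₀ with hTdef
  have hT0 : (0 : Fin m → ℝ) ∈ T := ⟨p, hpV₀, hHp⟩
  have hG0 : G 0 = p := by rw [← hHp]; exact hGH p hpV₀
  have hGT : ∀ u ∈ T, G u ∈ U ∧ H (G u) = u := by
    rintro _ ⟨q, hq, rfl⟩
    rw [hGH q hq]
    exact ⟨hV₀U hq, rfl⟩
  have hGl : ∀ u ∈ T, lam (G u) = u l := fun u hu => by rw [← hHl, (hGT u hu).2]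
  have hGd : HasFDerivAt G (A : (Fin m → ℝ) →L[ℝ] (Fin m → ℝ)) 0 := by
    have := HasFDerivAt.of_local_left_inverse (f := H) (g := G) (f' := A.symm) (a := 0)
      (hGs.continuousOn.continuousAt (hT.mem_nhds hT0)) (by rw [hG0]; exact hHd)
      (by filter_upwards [hT.mem_nhds hT0] with u hu using (hGT u hu).2)
    simpa using this
  -- projection onto the hyperplane
  let pl : (Fin m → ℝ) →L[ℝ] ℝ := ContinuousLinearMap.proj l
  have hpl : ∀ u, pl u = u l := fun u => rfl
  let π : (Fin m → ℝ) →L[ℝ] (Fin m → ℝ) := ContinuousLinearMap.id ℝ _ - pl.smulRight el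
  have hπ : ∀ u, π u = u - u l • el := fun u => by simp [π, hpl]
  have hπl : ∀ u, π u l = 0 := fun u => by simp [hπ, hell]
  have hπid : ∀ u : Fin m → ℝ, u l = 0 → π u = u := fun u hu => by simp [hπ, hu]
  have hπe : π el = 0 := by simp [hπ, hell]
  let Φ : (Fin m → ℝ) → (Fin m → ℝ) := fun u =>
    G (π u) + u l • η (G (π u)) + ((u l) ^ 2 / 2) • Y
  have hΦ0 : Φ 0 = p := by simp [Φ, hG0]
  have hΦG : ∀ u : Fin m → ℝ, u l = 0 → Φ u = G u := fun u hu => by simp [Φ, hu, hπid u hu]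
  let W₁ : Set (Fin m → ℝ) := π ⁻¹' T
  have hW₁ : IsOpen W₁ := hT.preimage π.continuous
  have h0W₁ : (0 : Fin m → ℝ) ∈ W₁ := by simpa [W₁] using hT0
  have hGπs : ContDiffOn ℝ (⊤ : ℕ∞) (fun u => G (π u)) W₁ :=
    hGs.comp π.contDiff.contDiffOn (fun u hu => hu)
  have hηGs : ContDiffOn ℝ (⊤ : ℕ∞) (fun u => η (G (π u))) W₁ :=
    hηs.comp hGπs (fun u hu => (hGT _ hu).1)
  have hpls : ContDiffOn ℝ (⊤ : ℕ∞) (fun u : Fin m → ℝ => u l) W₁ := pl.contDiff.contDiffOn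
  have hΦs : ContDiffOn ℝ (⊤ : ℕ∞) Φ W₁ :=
    (hGπs.add (hpls.smul hηGs)).add (((hpls.pow 2).div_const 2).smul contDiffOn_const)
  have hΦd : ∀ u ∈ W₁, HasFDerivAt Φ (fderiv ℝ Φ u) u := fun u hu =>
    ((hΦs.contDiffAt (hW₁.mem_nhds hu)).differentiableAt htop).hasFDerivAt
  -- derivative in the direction `el`
  have hΦl : ∀ u ∈ W₁, fderiv ℝ Φ u el = η (G (π u)) + u l • Y := by
    intro u hu
    have hline : HasDerivAt (fun t : ℝ => u + t • el) el 0 := by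
      simpa using ((hasDerivAt_id (0 : ℝ)).smul_const el).const_add u
    have h1 : HasDerivAt (fun t : ℝ => Φ (u + t • el)) (fderiv ℝ Φ u el) 0 :=
      hasDerivAt_curve (hΦd u hu) hline (by simp)
    have h2 : (fun t : ℝ => Φ (u + t • el)) = fun t : ℝ =>
        G (π u) + (u l + t) • η (G (π u)) + ((u l + t) ^ 2 / 2) • Y := by
      funext t
      simp [Φ, hπe, hell]
    have h3 : HasDerivAt (fun t : ℝ => u l + t) 1 0 := (hasDerivAt_id (0 : ℝ)).const_add (u l)
    have h4 := ((h3.smul_const (η (G (π u)))).const_add (G (π u))).add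
      (((h3.pow 2).div_const 2).smul_const Y)
    rw [h2] at h1
    refine h1.unique ?_
    convert! h4 using 1
    simp
  have hΦA : HasFDerivAt Φ (A : (Fin m → ℝ) →L[ℝ] (Fin m → ℝ)) 0 := by
    have h1 : HasFDerivAt (fun u => G (π u)) ((A : (Fin m → ℝ) →L[ℝ] (Fin m → ℝ)).comp π) 0 :=
      HasFDerivAt.comp 0 (by simpa using hGd) π.hasFDerivAt
    have h2 : HasFDerivAt (fun u => η (G (π u))) (fderiv ℝ (fun u => η (G (π u))) 0) 0 :=
      ((hηGs.contDiffAt (hW₁.mem_nhds h0W₁)).differentiableAt htop).hasFDerivAt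
    have h3 : HasFDerivAt (fun u : Fin m → ℝ => u l) pl 0 := pl.hasFDerivAt
    have h4 := (h1.add (h3.smul h2)).add (((h3.pow 2).mul_const (2⁻¹ : ℝ)).smul_const Y)
    have h5 : HasFDerivAt Φ _ 0 := h4
    convert! h5 using 1
    ext1 v
    simp [hπ, hpl, hG0, hAl]
  -- the singular set
  have hW₂ : IsOpen (W₁ ∩ Φ ⁻¹' U) := hΦs.continuousOn.isOpen_inter_preimage hW₁ hU
  have h0W₂ : (0 : Fin m → ℝ) ∈ W₁ ∩ Φ ⁻¹' U := ⟨h0W₁, by simpa [hΦ0] using hp⟩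
  have hgs : ContDiffOn ℝ (⊤ : ℕ∞) (fun u => lam (Φ u)) (W₁ ∩ Φ ⁻¹' U) :=
    hlam.comp (hΦs.mono inter_subset_left) (fun u hu => hu.2)
  have hgd : HasFDerivAt (fun u => lam (Φ u)) pl 0 := by
    have h1 : HasFDerivAt (fun u => lam (Φ u)) (ℓ.comp (A : (Fin m → ℝ) →L[ℝ] (Fin m → ℝ))) 0 :=
      HasFDerivAt.comp 0 (by rw [hΦ0]; exact hℓ) hΦA
    convert! h1 using 1
    ext1 v
    simp [hAℓ, hpl]
  have hstrict : HasStrictFDerivAt (fun u => lam (Φ u)) pl 0 :=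
    (hgs.contDiffAt (hW₂.mem_nhds h0W₂)).hasStrictFDerivAt' hgd htop
  have hev : ∀ᶠ u in 𝓝 (0 : Fin m → ℝ),
      ‖lam (Φ u) - lam (Φ (π u)) - pl (u - π u)‖ ≤ (1 / 2) * ‖u - π u‖ := by
    have h1 := hstrict.isLittleO.def (c := 1 / 2) (by norm_num)
    have h2 : Tendsto (fun u : Fin m → ℝ => (u, π u)) (𝓝 0) (𝓝 (0, 0)) := by
      have : Continuous (fun u : Fin m → ℝ => (u, π u)) := continuous_id.prodMk π.continuous
      simpa using this.tendsto 0
    exact h2.eventually h1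
  obtain ⟨N, hNsub, hN, h0N⟩ := mem_nhds_iff.1 hev
  have hiff : ∀ u ∈ W₁ ∩ N, (lam (Φ u) = 0 ↔ u l = 0) := by
    rintro u ⟨hu, huN⟩
    have hz : lam (Φ (π u)) = 0 := by rw [hΦG _ (hπl u), hGl _ hu, hπl]
    constructor
    · intro h
      have h1 := hNsub huN
      have h2 : u - π u = u l • el := by rw [hπ]; abel
      simp only [mem_ofPred_eq, h, hz, h2] at h1
      rw [norm_smul, hpl] at h1
      have h3 : ‖el‖ = 1 := by rw [hel, Pi.norm_single]; simp
      rw [h3] at h1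
      simp [hell] at h1
      by_contra hne
      have := abs_pos.2 hne
      linarith
    · intro h
      rwa [hπid u h] at hz
  -- apply the inverse function theorem
  obtain ⟨V, Ψ, hV, h0V, hVW, hVo, hΨ, hΨΦ⟩ := exists_local_diffeo Φ (W₁ ∩ Φ ⁻¹' U ∩ N)
    (hW₂.inter hN) 0 ⟨h0W₂, h0N⟩ (hΦs.mono fun u hu => hu.1.1) A hΦA
  have hfd : ∀ q ∈ U, HasFDerivAt f (fderiv ℝ f q) q := fun q hq =>
    ((hf.contDiffAt (hU.mem_nhds hq)).differentiableAt htop).hasFDerivAt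
  have hfΦ : ∀ u ∈ W₁ ∩ Φ ⁻¹' U, ∀ v, fderiv ℝ (f ∘ Φ) u v = fderiv ℝ f (Φ u) (fderiv ℝ Φ u v) := by
    intro u hu v
    rw [((hfd _ hu.2).comp u (hΦd u hu.1)).fderiv]
    rfl
  have hpdl : ∀ u ∈ W₁ ∩ Φ ⁻¹' U,
      pd l (f ∘ Φ) u = fderiv ℝ f (Φ u) (η (G (π u)) + u l • Y) := by
    intro u hu
    rw [← hΦl u hu.1, ← hfΦ u hu]
    rfl
  refine ⟨V, 0, Φ, Ψ, hV, h0V, hΦs.mono fun u hu => (hVW hu).1.1, hVo, ?_, hΦ0, hΨ, hΨΦ, ?_, ?_, ?_,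
    ?_, ?_⟩
  · rintro _ ⟨u, hu, rfl⟩
    exact (hVW hu).1.2
  · rintro _ ⟨u, hu, rfl⟩
    rw [hΨΦ u hu]
  · intro u hu
    exact hiff u ⟨(hVW hu).1.1, (hVW hu).2⟩
  · rw [hΦA.fderiv]
    exact hAz
  · intro u hu hul
    have huW := (hVW hu).1
    rw [hpdl u huW, hul, zero_smul, add_zero, hπid u hul, hΦG u hul]
    have huT : u ∈ T := by
      have := huW.1
      simpa [W₁, hπid u hul] using this
    exact hηn _ (hGT u huT).1 (by rw [hGl u huT, hul])
  · intro j _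
    have hj : pd j (f ∘ Φ) 0 = fderiv ℝ f p (fderiv ℝ Φ 0 (Pi.single j 1)) := by
      rw [← hΦ0, ← hfΦ 0 h0W₂]
      rfl
    have hline : HasDerivAt (fun t : ℝ => t • el) el 0 := by
      simpa using (hasDerivAt_id (0 : ℝ)).smul_const el
    have hs : ContDiffOn ℝ (⊤ : ℕ∞) (f ∘ Φ) (W₁ ∩ Φ ⁻¹' U) :=
      hf.comp (hΦs.mono inter_subset_left) (fun u hu => hu.2)
    have hs2 := contDiffOn_pd hW₂ _ hs l
    have h1 : HasDerivAt (fun t : ℝ => pd l (f ∘ Φ) (t • el)) (pd l (pd l (f ∘ Φ)) 0) 0 := by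
      have h := ((hs2.contDiffAt (hW₂.mem_nhds h0W₂)).differentiableAt htop).hasFDerivAt
      exact hasDerivAt_curve h hline (by simp)
    have h2 : (fun t : ℝ => pd l (f ∘ Φ) (t • el)) =ᶠ[𝓝 0]
        fun t : ℝ => fderiv ℝ f (Φ (t • el)) (η p + t • Y) := by
      have hc : Tendsto (fun t : ℝ => t • el) (𝓝 0) (𝓝 0) := by
        simpa using hline.continuousAt.tendsto
      filter_upwards [hc.eventually (hW₂.mem_nhds h0W₂)] with t ht
      rw [hpdl _ ht]
      simp [hπe, hell, hG0]
    have h3 : HasDerivAt (fun t : ℝ => Φ (t • el)) (η p) 0 := by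
      have : HasDerivAt (fun t : ℝ => Φ (t • el)) (A el) 0 :=
        hasDerivAt_curve hΦA hline (by simp)
      rwa [hAl] at this
    have h4 : HasFDerivAt (fderiv ℝ f) (fderiv ℝ (fderiv ℝ f) p) p :=
      (((hf.fderiv_of_isOpen (m := (⊤ : ℕ∞)) hU (by simp)).contDiffAt
        (hU.mem_nhds hp)).differentiableAt htop).hasFDerivAt
    have h5 : HasDerivAt (fun t : ℝ => fderiv ℝ f (Φ (t • el)))
        (fderiv ℝ (fderiv ℝ f) p (η p)) 0 :=
      hasDerivAt_curve h4 h3 (by simp [hΦ0])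
    have h6 : HasDerivAt (fun t : ℝ => η p + t • Y) Y 0 := by
      simpa using ((hasDerivAt_id (0 : ℝ)).smul_const Y).const_add (η p)
    have h7 := h5.clm_apply h6
    have h8 := h1.unique (h7.congr_of_eventuallyEq h2)
    rw [h8, hj]
    simpa [hΦ0] using hY (fderiv ℝ Φ 0 (Pi.single j 1))

/-- The coordinate lemma at an `A₂`-point: around an `A₂`-point `p` of a frontal `(f, ν)`
and for any nonzero vector `X` tangent at `p` to the singular hypersurface
`Σ = {λ = 0}`, there is a coordinate system `Φ : V → U`, `Φ(o) = p`, such that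
(1) `Φ^{-1}(Σ) = {u_m = 0}`, (2) `dΦ_o(∂_1) = X`, (3) `∂_m` is a null direction along
`{u_m = 0}`, and (4) `⟨∂_j f̃, ∂_m ∂_m f̃⟩ = 0` at `o` for `j = 1, …, m−1`,
where `f̃ = f ∘ Φ`. -/
theorem coordinate_lemma_A2 {m : ℕ} (hm : 2 ≤ m)
    (U : Set (Fin m → ℝ)) (hU : IsOpen U)
    (f ν : (Fin m → ℝ) → (Fin (m + 1) → ℝ))
    (hf : ContDiffOn ℝ (⊤ : ℕ∞) f U) (hν : ContDiffOn ℝ (⊤ : ℕ∞) ν U)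
    (hν1 : ∀ q ∈ U, ν q ⬝ᵥ ν q = 1)
    (htang : ∀ q ∈ U, ∀ k : Fin m, pd k f q ⬝ᵥ ν q = 0)
    (p : Fin m → ℝ) (hp : p ∈ U) (hA2 : IsA2 f ν p)
    (X : Fin m → ℝ) (hX0 : X ≠ 0) (hXtan : fderiv ℝ (lamb f ν) p X = 0) :
    ∃ (V : Set (Fin m → ℝ)) (o : Fin m → ℝ) (Φ Ψ : (Fin m → ℝ) → (Fin m → ℝ)),
      IsOpen V ∧ o ∈ V ∧ ContDiffOn ℝ (⊤ : ℕ∞) Φ V ∧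
      IsOpen (Φ '' V) ∧ Φ '' V ⊆ U ∧ Φ o = p ∧
      ContDiffOn ℝ (⊤ : ℕ∞) Ψ (Φ '' V) ∧
      (∀ x ∈ V, Ψ (Φ x) = x) ∧ (∀ y ∈ Φ '' V, Φ (Ψ y) = y) ∧
      (∀ x ∈ V, (lamb f ν (Φ x) = 0 ↔ x ⟨m - 1, by omega⟩ = 0)) ∧
      fderiv ℝ Φ o (Pi.single (⟨0, by omega⟩ : Fin m) 1) = X ∧
      (∀ x ∈ V, x ⟨m - 1, by omega⟩ = 0 →
        pd (⟨m - 1, by omega⟩ : Fin m) (f ∘ Φ) x = 0) ∧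
      (∀ j : Fin m, (j : ℕ) < m - 1 →
        pd j (f ∘ Φ) o ⬝ᵥ
          pd (⟨m - 1, by omega⟩ : Fin m) (pd (⟨m - 1, by omega⟩ : Fin m) (f ∘ Φ)) o
            = 0) := by
  obtain ⟨h0, hd, hnull⟩ := hA2
  obtain ⟨η₀, hη₀s, hη₀p, hη₀n⟩ := exists_null_field U hU f ν hf hν hν1 htang p hp h0 hd
  have hc : fderiv ℝ (lamb f ν) p (η₀ p) ≠ 0 := hnull _ hη₀p (hη₀n p hp h0)
  have hlam : ContDiffOn ℝ (⊤ : ℕ∞) (lamb f ν) U :=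
    contDiffOn_det (lmat f ν) fun i j => contDiffOn_pi.1 (contDiffOn_lmat hU f ν hf hν i) j
  have hlamp : HasFDerivAt (lamb f ν) (fderiv ℝ (lamb f ν) p) p :=
    ((hlam.contDiffAt (hU.mem_nhds hp)).differentiableAt (by simp)).hasFDerivAt
  obtain ⟨η, hηs, hηn, hη1⟩ : ∃ η : (Fin m → ℝ) → (Fin m → ℝ), ContDiffOn ℝ (⊤ : ℕ∞) η U ∧
      (∀ q ∈ U, lamb f ν q = 0 → fderiv ℝ f q (η q) = 0) ∧
      fderiv ℝ (lamb f ν) p (η p) = 1 := by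
    refine ⟨fun q => (fderiv ℝ (lamb f ν) p (η₀ p))⁻¹ • η₀ q, hη₀s.const_smul _, ?_, ?_⟩
    · intro q hq hl
      rw [map_smul, hη₀n q hq hl, smul_zero]
    · rw [map_smul, smul_eq_mul, inv_mul_cancel₀ hc]
  exact coordinate_core U hU f hf (lamb f ν) hlam p hp h0 X hX0 η hηs hηn _ hlamp hη1 hXtan
    ⟨0, by omega⟩ ⟨m - 1, by omega⟩ (by simp [Fin.ext_iff]; omega)
end
end
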